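/- arXiv:2205.11125 — 6 statements merged into one kernel-verified Lean document; each statement's English description precedes it below -/
import Mathlib

section
/- Let G be a finite simple connected graph. If G has an even number of edges or G contains at least one vertex of odd degree, then G admits a 2-edge-coloring c : E(G) → {1,2} such that, for every vertex u of G and every color α ∈ {1,2}, at most ⌈d_G(u)/2⌉ of the edges incident with u have color α. -/
/-!
Encode a 2-coloring as a sign `±1` on each edge; the required bound at `u` follows once the signs of
the edges at `u` sum to `0` or `±1`.

Signs alternating along a trail cancel at every passage through a vertex, so along an Eulerian
circuit based at `s` they cancel at every vertex other than `s`, and also at `s` if the number of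
edges is even. By Euler's theorem this settles a connected graph with all degrees even and an even
number of edges. If some degree is odd, join a new apex to all vertices of odd degree and alternate
signs along an Eulerian circuit based at the apex: all original vertices are balanced, and deleting
the apex removes at most one edge at each of them.
-/

open Finset SimpleGraph

section EulerianCircuit

variable {V : Type*} {G : SimpleGraph V} {u v : V}

theorem countP_mem_edges_eq_degree [DecidableEq V] {x : V} [Fintype (G.neighborSet x)]
    {p : G.Walk u v} (hp : p.IsTrail) (hx : ∀ w, G.Adj x w → s(x, w) ∈ p.edges) :
    p.edges.countP (x ∈ ·) = G.degree x := by
  have hfilter : (p.edges.filter (x ∈ ·)).toFinset = G.incidenceFinset x := by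
    ext e
    simp only [List.mem_toFinset, List.mem_filter, decide_eq_true_eq, mem_incidenceFinset]
    refine ⟨fun ⟨he, hxe⟩ ↦ ⟨p.edges_subset_edgeSet he, hxe⟩, fun ⟨he, hxe⟩ ↦ ⟨?_, hxe⟩⟩
    obtain ⟨w, rfl⟩ := Sym2.mem_iff_exists.1 hxe
    exact hx w he
  rw [List.countP_eq_length_filter, ← List.toFinset_card_of_nodup (hp.edges_nodup.filter _),
    hfilter, card_incidenceFinset_eq_degree]

theorem exists_adj_notMem_edges_of_isTrail_of_ne [Fintype (G.neighborSet u)] {p : G.Walk u v}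
    (hp : p.IsTrail) (huv : u ≠ v) (hu : Even (G.degree u)) :
    ∃ w, G.Adj u w ∧ s(u, w) ∉ p.edges := by
  classical
  by_contra! hused
  rw [← countP_mem_edges_eq_degree hp hused, hp.even_countP_edges_iff] at hu
  exact (hu huv).1 rfl

theorem exists_mem_support_adj_notMem_edges (hG : G.Preconnected) (p : G.Walk u v) {e : Sym2 V}
    (he : e ∈ G.edgeSet) (hep : e ∉ p.edges) :
    ∃ x ∈ p.support, ∃ y, G.Adj x y ∧ s(x, y) ∉ p.edges := by
  by_cases hall : ∀ x, x ∈ p.support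
  · induction e with
    | _ a b => exact ⟨a, hall a, b, he, hep⟩
  · push Not at hall
    obtain ⟨z, hz⟩ := hall
    obtain ⟨w⟩ := hG u z
    obtain ⟨d, -, hfst, hsnd⟩ :=
      w.exists_boundary_dart {x | x ∈ p.support} p.start_mem_support hz
    exact ⟨d.fst, hfst, d.snd, d.adj, fun h ↦ hsnd (p.snd_mem_support_of_mem_edges h)⟩

variable [DecidableEq V]

theorem mem_support_of_isEulerian (hG : G.Preconnected) {p : G.Walk u v} (hp : p.IsEulerian)
    (x : V) : x ∈ p.support := by
  obtain ⟨w⟩ := hG x u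
  cases w with
  | nil => exact p.start_mem_support
  | cons hadj _ => exact p.fst_mem_support_of_mem_edges (hp.mem_edges_iff.2 hadj)

theorem isEulerian_rotate {p : G.Walk v v} (hp : p.IsEulerian) (hu : u ∈ p.support) :
    (p.rotate u hu).IsEulerian :=
  ((Walk.isTrail_rotate hu).2 hp.isTrail).isEulerian_of_forall_mem fun _ he ↦
    (p.rotate_edges u hu).mem_iff.2 (hp.mem_edges_iff.2 he)

/-- A longest trail is closed, since an open one could be extended at its start by parity; it then
uses every edge, since otherwise it could be rotated to a vertex meeting an unused edge. -/
theorem exists_isEulerian_of_even_degree [G.LocallyFinite] [Finite G.edgeSet]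
    (hG : G.Preconnected) (heven : ∀ x, Even (G.degree x)) (s : V) :
    ∃ p : G.Walk s s, p.IsEulerian := by
  have : Nonempty V := ⟨s⟩
  obtain ⟨u, v, p, hp, hmax⟩ := Walk.exists_isTrail_forall_isTrail_length_le_length G
  have hstuck {x y z : V} (q : G.Walk x y) (hq : q.IsTrail) (hlen : q.length = p.length)
      (hadj : G.Adj x z) : s(x, z) ∈ q.edges := by
    by_contra hxz
    have htrail : (q.cons hadj.symm).IsTrail :=
      (Walk.isTrail_cons _ _).2 ⟨hq, by rwa [Sym2.eq_swap]⟩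
    have hlonger := hmax _ _ _ htrail
    rw [Walk.length_cons] at hlonger
    omega
  have hclosed : u = v := by
    by_contra huv
    obtain ⟨w, hadj, hw⟩ := exists_adj_notMem_edges_of_isTrail_of_ne hp huv (heven u)
    exact hw (hstuck p hp rfl hadj)
  subst hclosed
  have hEuler : p.IsEulerian := hp.isEulerian_of_forall_mem fun e he ↦ by
    by_contra hep
    obtain ⟨x, hx, y, hadj, hxy⟩ := exists_mem_support_adj_notMem_edges hG p he hep
    refine hxy ((p.rotate_edges x hx).mem_iff.1 ?_)
    exact hstuck (p.rotate x hx) ((Walk.isTrail_rotate hx).2 hp) (by simp) hadj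
  exact ⟨_, isEulerian_rotate hEuler (mem_support_of_isEulerian hG hEuler s)⟩

end EulerianCircuit

section Imbalance

variable {V : Type*} [DecidableEq V] {G : SimpleGraph V} {v : V}

/-- The imbalance at `v` of a signing `f` of the edges: the number of positive edges at `v` minus
the number of negative ones. Signs are units of `ℤ`, and values of `f` off the edge set of `G` are
ignored. -/
def imbalance (G : SimpleGraph V) (f : Sym2 V → ℤˣ) (v : V) [Fintype (G.neighborSet v)] : ℤ :=
  ∑ e ∈ G.incidenceFinset v, (f e : ℤ)

theorem sum_incidenceFinset_eq_sum_neighborFinset {M : Type*} [AddCommMonoid M]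
    [Fintype (G.neighborSet v)] (f : Sym2 V → M) :
    ∑ e ∈ G.incidenceFinset v, f e = ∑ w ∈ G.neighborFinset v, f s(v, w) := by
  have himage : G.incidenceFinset v = (G.neighborFinset v).image (s(v, ·)) := by
    ext e
    simp only [mem_incidenceFinset, mem_image, mem_neighborFinset]
    constructor
    · rintro ⟨he, hve⟩
      obtain ⟨w, rfl⟩ := Sym2.mem_iff_exists.1 hve
      exact ⟨w, he, rfl⟩
    · rintro ⟨w, hadj, rfl⟩
      exact ⟨hadj, Sym2.mem_mk_left v w⟩
  rw [himage, sum_image fun _ _ _ _ h ↦ Sym2.congr_right.1 h]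

theorem two_mul_card_filter_eq_unit {ι : Type*} (s : Finset ι) (f : ι → ℤˣ) (ε : ℤˣ) :
    (2 * #{i ∈ s | f i = ε} : ℤ) = #s + ε * ∑ i ∈ s, (f i : ℤ) := by
  have hterm (i : ι) : (if f i = ε then 2 else 0 : ℤ) = 1 + ε * f i := by
    rcases Int.units_eq_one_or (f i) with hi | hi <;>
      rcases Int.units_eq_one_or ε with rfl | rfl <;> simp [hi]
  calc (2 * #{i ∈ s | f i = ε} : ℤ)
      = ∑ i ∈ s, if f i = ε then 2 else 0 := by simp [← sum_filter, mul_comm]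
    _ = #s + ε * ∑ i ∈ s, (f i : ℤ) := by simp [hterm, sum_add_distrib, mul_sum]

theorem card_filter_eq_unit_le_of_abs_sum_le_one {ι : Type*} {s : Finset ι} {f : ι → ℤˣ}
    (hf : |∑ i ∈ s, (f i : ℤ)| ≤ 1) (ε : ℤˣ) : #{i ∈ s | f i = ε} ≤ (#s + 1) / 2 := by
  have hle : ε * ∑ i ∈ s, (f i : ℤ) ≤ 1 :=
    (le_abs_self _).trans (by rwa [abs_mul, Int.isUnit_iff_abs_eq.1 ε.isUnit, one_mul])
  have := two_mul_card_filter_eq_unit s f ε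
  omega

end Imbalance

section AlternatingSign

variable {V : Type*} [DecidableEq V] {G : SimpleGraph V} {u v : V}

/-- The signing that alternates `1, -1, 1, …` along the walk `p`, each edge being signed at its
first occurrence. Edges off `p` receive an irrelevant value. -/
def alternatingSign (p : G.Walk u v) (e : Sym2 V) : ℤˣ :=
  (-1) ^ p.edges.idxOf e

theorem alternatingSign_cons_self (h : G.Adj u v) {w : V} (p : G.Walk v w) :
    alternatingSign (p.cons h) s(u, v) = 1 := by
  simp [alternatingSign]

theorem alternatingSign_cons_of_ne (h : G.Adj u v) {w : V} (p : G.Walk v w) {e : Sym2 V}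
    (he : s(u, v) ≠ e) : alternatingSign (p.cons h) e = -alternatingSign p e := by
  simp [alternatingSign, List.idxOf_cons_ne _ he, pow_succ]

theorem sum_alternatingSign_of_isTrail {p : G.Walk u v} (hp : p.IsTrail) (x : V) :
    ∑ e ∈ p.edges.toFinset with x ∈ e, (alternatingSign p e : ℤ) =
      (if x = u then 1 else 0) - (if x = v then (-1) ^ p.length else 0) := by
  induction p with
  | nil => simp
  | @cons a b c hab q ih =>
    obtain ⟨hq, habq⟩ := (Walk.isTrail_cons _ _).1 hp
    have hmem : (if x ∈ s(a, b) then 1 else 0 : ℤ) =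
        (if x = a then 1 else 0) + (if x = b then 1 else 0) := by
      have := hab.ne
      grind
    have htail : ∀ e ∈ q.edges.toFinset,
        (if x ∈ e then (alternatingSign (q.cons hab) e : ℤ) else 0) =
          -(if x ∈ e then (alternatingSign q e : ℤ) else 0) := by
      intro e he
      rw [alternatingSign_cons_of_ne hab q fun h ↦ habq (h ▸ List.mem_toFinset.1 he)]
      split_ifs <;> simp
    rw [sum_filter] at ih ⊢
    rw [Walk.edges_cons, List.toFinset_cons, sum_insert (by simpa using habq),
      alternatingSign_cons_self, Units.val_one, sum_congr rfl htail, sum_neg_distrib, ih hq, hmem,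
      Walk.length_cons, pow_succ]
    split_ifs <;> ring

theorem imbalance_alternatingSign_of_isEulerian [Fintype G.edgeSet] {p : G.Walk u v}
    (hp : p.IsEulerian) (x : V) [Fintype (G.neighborSet x)] :
    imbalance G (alternatingSign p) x =
      (if x = u then 1 else 0) - (if x = v then (-1) ^ #G.edgeFinset else 0) := by
  have hedges : p.edges.toFinset = G.edgeFinset := by
    ext e
    simp [hp.mem_edges_iff]
  have hlength : p.length = #G.edgeFinset := by
    rw [← hedges, List.toFinset_card_of_nodup hp.isTrail.edges_nodup, Walk.length_edges]
  rw [imbalance, incidenceFinset_eq_filter, ← hedges, sum_alternatingSign_of_isTrail hp.isTrail,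
    hlength, hedges]

theorem exists_forall_imbalance_eq_zero [G.LocallyFinite] [Fintype G.edgeSet]
    (hG : G.Preconnected) (heven : ∀ x, Even (G.degree x)) (hcard : Even #G.edgeFinset) :
    ∃ f : Sym2 V → ℤˣ, ∀ x, imbalance G f x = 0 := by
  obtain hV | ⟨⟨s⟩⟩ := isEmpty_or_nonempty V
  · exact ⟨1, isEmptyElim⟩
  obtain ⟨p, hp⟩ := exists_isEulerian_of_even_degree hG heven s
  refine ⟨alternatingSign p, fun x ↦ ?_⟩
  rw [imbalance_alternatingSign_of_isEulerian hp, hcard.neg_one_pow, sub_self]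

theorem exists_forall_ne_imbalance_eq_zero [G.LocallyFinite] [Finite G.edgeSet]
    (hG : G.Preconnected) (heven : ∀ x, Even (G.degree x)) (s : V) :
    ∃ f : Sym2 V → ℤˣ, ∀ x ≠ s, imbalance G f x = 0 := by
  have := Fintype.ofFinite G.edgeSet
  obtain ⟨p, hp⟩ := exists_isEulerian_of_even_degree hG heven s
  refine ⟨alternatingSign p, fun x hx ↦ ?_⟩
  simp [imbalance_alternatingSign_of_isEulerian hp, hx]

end AlternatingSign

section Apex

variable {V : Type*} {G : SimpleGraph V} {S : Finset V} {v : V}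

/-- The graph `G` with a new vertex, the apex `none`, joined to the vertices in `S`. Taking
for `S` the vertices of odd degree makes all degrees even. -/
def addApex (G : SimpleGraph V) (S : Finset V) : SimpleGraph (Option V) where
  Adj
    | some a, some b => G.Adj a b
    | some a, none => a ∈ S
    | none, some b => b ∈ S
    | none, none => False
  symm := ⟨by rintro (_ | a) (_ | b) h <;> first | exact h | exact G.adj_symm h⟩
  loopless := ⟨by rintro (_ | a) h <;> simp_all⟩

@[simp]
theorem addApex_adj_some_some {a b : V} : (addApex G S).Adj (some a) (some b) ↔ G.Adj a b :=
  Iff.rfl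

@[simp]
theorem addApex_adj_some_none {a : V} : (addApex G S).Adj (some a) none ↔ a ∈ S :=
  Iff.rfl

@[simp]
theorem addApex_adj_none_some {b : V} : (addApex G S).Adj none (some b) ↔ b ∈ S :=
  Iff.rfl

theorem connected_addApex (hG : G.Preconnected) (hS : S.Nonempty) : (addApex G S).Connected := by
  obtain ⟨u, hu⟩ := hS
  let someHom : G →g addApex G S := ⟨some, addApex_adj_some_some.2⟩
  refine (connected_iff_exists_forall_reachable _).2 ⟨some u, ?_⟩
  rintro (_ | w)
  · exact (addApex_adj_some_none.2 hu).reachable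
  · exact (hG u w).map someHom

theorem degree_addApex_none [Fintype ((addApex G S).neighborSet none)] :
    (addApex G S).degree none = #S := by
  have hneighbor : (addApex G S).neighborFinset none = S.map .some := by
    ext (_ | b) <;> simp
  rw [← card_neighborFinset_eq_degree, hneighbor, card_map]

theorem sum_neighborFinset_addApex_some [DecidableEq V] {M : Type*} [AddCommMonoid M]
    [Fintype (G.neighborSet v)] [Fintype ((addApex G S).neighborSet (some v))] (g : Option V → M) :
    ∑ w ∈ (addApex G S).neighborFinset (some v), g w =
      (if v ∈ S then g none else 0) + ∑ w ∈ G.neighborFinset v, g (some w) := by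
  split_ifs with hv
  · have hneighbor : (addApex G S).neighborFinset (some v) = (G.neighborFinset v).insertNone := by
      ext (_ | b) <;> simp [hv]
    rw [hneighbor, sum_insertNone]
  · have hneighbor : (addApex G S).neighborFinset (some v) = (G.neighborFinset v).map .some := by
      ext (_ | b) <;> simp [hv]
    simp [hneighbor]

theorem degree_addApex_some [DecidableEq V] [Fintype (G.neighborSet v)]
    [Fintype ((addApex G S).neighborSet (some v))] :
    (addApex G S).degree (some v) = (if v ∈ S then 1 else 0) + G.degree v := by
  simpa using sum_neighborFinset_addApex_some (G := G) (S := S) (v := v) fun _ ↦ (1 : ℕ)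

theorem imbalance_addApex_some [DecidableEq V] [Fintype (G.neighborSet v)]
    [Fintype ((addApex G S).neighborSet (some v))] (f : Sym2 (Option V) → ℤˣ) :
    imbalance (addApex G S) f (some v) =
      (if v ∈ S then (f s(some v, none) : ℤ) else 0) + imbalance G (f ∘ Sym2.map some) v := by
  simp [imbalance, sum_incidenceFinset_eq_sum_neighborFinset, sum_neighborFinset_addApex_some]

theorem even_degree_addApex_odd [Fintype V] [DecidableRel G.Adj]
    [(addApex G {w | Odd (G.degree w)}).LocallyFinite] (x : Option V) :
    Even ((addApex G {w | Odd (G.degree w)}).degree x) := by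
  classical
  cases x with
  | none => simpa only [degree_addApex_none] using G.even_card_odd_degree_vertices
  | some v =>
    simp only [degree_addApex_some, mem_filter_univ]
    split_ifs with hv
    · exact odd_one.add_odd hv
    · simpa using hv

theorem exists_forall_abs_imbalance_le_one_of_odd_degree [Fintype V] [DecidableEq V]
    [DecidableRel G.Adj] (hG : G.Preconnected) (hodd : ∃ w, Odd (G.degree w)) :
    ∃ f : Sym2 V → ℤˣ, ∀ v, |imbalance G f v| ≤ 1 := by
  classical
  have hS : ({w | Odd (G.degree w)} : Finset V).Nonempty := by simpa [Finset.Nonempty] using hodd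
  obtain ⟨f, hf⟩ := exists_forall_ne_imbalance_eq_zero (connected_addApex hG hS).preconnected
    even_degree_addApex_odd none
  refine ⟨f ∘ Sym2.map some, fun v ↦ ?_⟩
  have hbalanced := hf (some v) (Option.some_ne_none v)
  rw [imbalance_addApex_some, add_comm, add_eq_zero_iff_eq_neg] at hbalanced
  rw [hbalanced, abs_neg]
  split_ifs
  · exact (Int.isUnit_iff_abs_eq.1 (Units.isUnit _)).le
  · simp

end Apex

/-- Let `G` be a finite simple connected graph. If `G` has an even number
of edges or contains a vertex of odd degree, then `G` admits a `2`-edge-coloring such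
that, for every vertex `u` and every color `α`, at most `⌈d_G(u)/2⌉` of the edges
incident with `u` have color `α`. -/
theorem majority_two_coloring_ceil {V : Type*} [Fintype V] [DecidableEq V]
    (G : SimpleGraph V) [DecidableRel G.Adj] (hconn : G.Connected)
    (h : Even G.edgeFinset.card ∨ ∃ u : V, Odd (G.degree u)) :
    ∃ c : Sym2 V → Fin 2, ∀ u : V, ∀ α : Fin 2,
      ((G.incidenceFinset u).filter (fun e => c e = α)).card ≤ (G.degree u + 1) / 2 := by
  obtain ⟨f, hf⟩ : ∃ f : Sym2 V → ℤˣ, ∀ v, |imbalance G f v| ≤ 1 := by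
    by_cases hodd : ∃ u, Odd (G.degree u)
    · exact exists_forall_abs_imbalance_le_one_of_odd_degree hconn.preconnected hodd
    · have heven : ∀ u, Even (G.degree u) := by simpa using hodd
      obtain ⟨f, hf⟩ :=
        exists_forall_imbalance_eq_zero hconn.preconnected heven (h.resolve_right hodd)
      exact ⟨f, fun v ↦ by simp [hf v]⟩
  let colorOfSign : ℤˣ ≃ Fin 2 := Fintype.equivFinOfCardEq Fintype.card_units_int
  refine ⟨colorOfSign ∘ f, fun u α ↦ ?_⟩
  simpa [colorOfSign.eq_symm_apply] using
    card_filter_eq_unit_le_of_abs_sum_le_one (hf u) (colorOfSign.symm α)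
end

section
/- Every finite simple graph of minimum degree at least 2 has a majority 4-edge-coloring. -/
/-!
Split each vertex `u` of degree `d` into `⌊d / 2⌋` parts and distribute the edges at `u` so that
every part receives at most three of them, which is possible since `d ≤ 3 ⌊d / 2⌋` for `2 ≤ d`. In a
proper `4`-edge-coloring of the resulting subcubic graph every color occurs at most once at each
part of `u`, hence at most `⌊d / 2⌋` times at `u`.

A subcubic graph is properly `4`-edge-colored by adding one edge `uv` at a time. If `u` and `v`
miss a common color, use it for `uv`. If not, then counting shows that every color is missing at
exactly one of them. Take `a` missing at `u`, an edge `ux` whose color `b` is missing at `v`, and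
`k` missing at `x`. If `k` is missing at `u`, recolor `ux` with `k` and give `uv` the color `b`.
Otherwise `k` is missing at `v`. The edges colored `a` or `k` form paths and cycles in which `u`,
`v` and `x` have degree at most one, so these three vertices are not all in the same component, and
exchanging `a` and `k` on the component of `u` or of `x` leads back to one of the easy cases.
-/

namespace MajorityColoring

open Finset SimpleGraph

variable {V α : Type*} {G H : SimpleGraph V} {c : Sym2 V → α} {a b k : α} {r u v w x : V}

/-- Edge colorings are total functions on `Sym2 V`; only their values on edges of `G` matter. Such a
coloring is proper if the edges at each vertex have pairwise distinct colors. -/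
def IsProperEdgeColoring (G : SimpleGraph V) (c : Sym2 V → α) : Prop :=
  ∀ u, Set.InjOn (fun v ↦ c s(u, v)) (G.neighborSet u)

/-- The colors of the edges at `u`; the colors outside this set are those missing at `u`. -/
def colorsAt (G : SimpleGraph V) (c : Sym2 V → α) (u : V) : Set α :=
  (fun v ↦ c s(u, v)) '' G.neighborSet u

lemma mem_colorsAt : k ∈ colorsAt G c u ↔ ∃ v, G.Adj u v ∧ c s(u, v) = k := Iff.rfl

lemma notMem_colorsAt : k ∉ colorsAt G c u ↔ ∀ v, G.Adj u v → c s(u, v) ≠ k := by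
  simp only [mem_colorsAt, not_exists, not_and, ne_eq]

lemma mem_colorsAt_of_adj (h : G.Adj u v) : c s(u, v) ∈ colorsAt G c u := ⟨v, h, rfl⟩

lemma ncard_colorsAt_le_degree [Fintype (G.neighborSet u)] :
    (colorsAt G c u).ncard ≤ G.degree u := by
  rw [← card_neighborSet_eq_degree, ← Nat.card_eq_fintype_card]
  exact Set.ncard_image_le

lemma IsProperEdgeColoring.mono (hc : IsProperEdgeColoring G c) (hle : H ≤ G) :
    IsProperEdgeColoring H c :=
  fun u ↦ (hc u).mono fun _ hv ↦ hle hv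

lemma IsProperEdgeColoring.ncard_colorsAt (hc : IsProperEdgeColoring G c)
    [Fintype (G.neighborSet u)] : (colorsAt G c u).ncard = G.degree u := by
  rw [← card_neighborSet_eq_degree, ← Nat.card_eq_fintype_card]
  exact (hc u).ncard_image

lemma exists_notMem_colorsAt [Fintype α] [Fintype (G.neighborSet u)]
    (h : G.degree u < Fintype.card α) : ∃ k, k ∉ colorsAt G c u := by
  by_contra! hall
  have huniv : colorsAt G c u = Set.univ := Set.eq_univ_of_forall hall
  have hle := ncard_colorsAt_le_degree (G := G) (c := c) (u := u)
  rw [huniv, Set.ncard_univ, Nat.card_eq_fintype_card] at hle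
  exact hle.not_gt h

lemma disjoint_colorsAt [Fintype α] [Fintype (G.neighborSet u)] [Fintype (G.neighborSet v)]
    (hunion : colorsAt G c u ∪ colorsAt G c v = Set.univ)
    (hsum : G.degree u + G.degree v ≤ Fintype.card α) :
    Disjoint (colorsAt G c u) (colorsAt G c v) := by
  rw [← Set.ncard_union_eq_iff]
  refine (Set.ncard_union_le _ _).antisymm ?_
  rw [hunion, Set.ncard_univ, Nat.card_eq_fintype_card]
  exact (Nat.add_le_add ncard_colorsAt_le_degree ncard_colorsAt_le_degree).trans hsum

/-! ### Recoloring a single edge -/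

section Update

variable [DecidableEq V]

lemma IsProperEdgeColoring.sup_edge (hc : IsProperEdgeColoring G c)
    (hu : k ∉ colorsAt G c u) (hv : k ∉ colorsAt G c v) :
    IsProperEdgeColoring (G ⊔ edge u v) (Function.update c s(u, v) k) := by
  have hk {w z y} (hw : s(w, z) = s(u, v)) (hy : G.Adj w y) : c s(w, y) ≠ k := by
    rcases Sym2.mem_iff.1 (hw ▸ Sym2.mem_mk_left w z) with rfl | rfl
    exacts [notMem_colorsAt.1 hu y hy, notMem_colorsAt.1 hv y hy]
  have hadj {w z} (h : (G ⊔ edge u v).Adj w z) (hne : s(w, z) ≠ s(u, v)) : G.Adj w z :=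
    h.resolve_right fun h ↦ hne ((adj_edge u v).1 h).1.symm
  intro w z hz y hy hzy
  by_cases hz' : s(w, z) = s(u, v) <;> by_cases hy' : s(w, y) = s(u, v)
  · exact Sym2.congr_right.1 (hz'.trans hy'.symm)
  · simp only [hz', Function.update_self, Function.update_of_ne hy'] at hzy
    exact absurd hzy.symm (hk hz' (hadj hy hy'))
  · simp only [hy', Function.update_self, Function.update_of_ne hz'] at hzy
    exact absurd hzy (hk hy' (hadj hz hz'))
  · simp only [Function.update_of_ne hz', Function.update_of_ne hy'] at hzy
    exact hc w (hadj hz hz') (hadj hy hy') hzy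

lemma IsProperEdgeColoring.update (hc : IsProperEdgeColoring G c) (h : G.Adj u v)
    (hu : k ∉ colorsAt G c u) (hv : k ∉ colorsAt G c v) :
    IsProperEdgeColoring G (Function.update c s(u, v) k) := by
  simpa only [G.sup_edge_of_adj h] using hc.sup_edge hu hv

lemma notMem_colorsAt_update {e : Sym2 V} (hb : b ∉ colorsAt G c w) (hkb : k ≠ b) :
    b ∉ colorsAt G (Function.update c e k) w := by
  refine notMem_colorsAt.2 fun z hz ↦ ?_
  by_cases he : s(w, z) = e
  · rwa [he, Function.update_self]
  · rw [Function.update_of_ne he]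
    exact notMem_colorsAt.1 hb z hz

lemma IsProperEdgeColoring.notMem_colorsAt_update_self (hc : IsProperEdgeColoring G c)
    (h : G.Adj u x) (hk : k ≠ c s(u, x)) :
    c s(u, x) ∉ colorsAt G (Function.update c s(u, x) k) u := by
  refine notMem_colorsAt.2 fun z hz ↦ ?_
  by_cases he : s(u, z) = s(u, x)
  · rwa [he, Function.update_self]
  · rw [Function.update_of_ne he]
    exact fun hzx ↦ he (congrArg _ (hc u hz h hzx))

/-- Recoloring `ux` with `k` frees its old color for the new edge `uv`. -/
lemma IsProperEdgeColoring.sup_edge_of_shift (hc : IsProperEdgeColoring G c) (hux : G.Adj u x)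
    (hv : c s(u, x) ∉ colorsAt G c v) (hu : k ∉ colorsAt G c u) (hx : k ∉ colorsAt G c x) :
    IsProperEdgeColoring (G ⊔ edge u v)
      (Function.update (Function.update c s(u, x) k) s(u, v) (c s(u, x))) := by
  have hk : k ≠ c s(u, x) := (notMem_colorsAt.1 hu x hux).symm
  exact (hc.update hux hu hx).sup_edge (hc.notMem_colorsAt_update_self hux hk)
    (notMem_colorsAt_update hv hk)

end Update

/-! ### Kempe components -/

/-- The graph of the edges of `G` colored `a` or `b`, whose components are the Kempe chains. -/
def kempeGraph (G : SimpleGraph V) (c : Sym2 V → α) (a b : α) : SimpleGraph V where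
  Adj u v := G.Adj u v ∧ (c s(u, v) = a ∨ c s(u, v) = b)
  symm := ⟨fun u v h ↦ ⟨h.1.symm, by rw [Sym2.eq_swap]; exact h.2⟩⟩
  loopless := ⟨fun _ h ↦ h.1.ne rfl⟩

lemma kempeGraph_le : kempeGraph G c a b ≤ G := fun _ _ h ↦ h.1

lemma colorsAt_kempeGraph : colorsAt (kempeGraph G c a b) c w = colorsAt G c w ∩ {a, b} := by
  ext k
  simp only [mem_colorsAt, kempeGraph, Set.mem_inter_iff, Set.mem_insert_iff,
    Set.mem_singleton_iff]
  grind

lemma IsProperEdgeColoring.degree_kempeGraph_le_two (hc : IsProperEdgeColoring G c)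
    [Fintype ((kempeGraph G c a b).neighborSet w)] : (kempeGraph G c a b).degree w ≤ 2 := by
  rw [← (hc.mono kempeGraph_le).ncard_colorsAt, colorsAt_kempeGraph]
  calc
    (colorsAt G c w ∩ {a, b}).ncard ≤ ({a, b} : Set α).ncard := Set.ncard_inter_le_ncard_right _ _
    _ ≤ ({b} : Set α).ncard + 1 := Set.ncard_insert_le a {b}
    _ = 2 := by rw [Set.ncard_singleton]

lemma IsProperEdgeColoring.degree_kempeGraph_le_one (hc : IsProperEdgeColoring G c)
    [Fintype ((kempeGraph G c a b).neighborSet w)]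
    (hw : a ∉ colorsAt G c w ∨ b ∉ colorsAt G c w) : (kempeGraph G c a b).degree w ≤ 1 := by
  rw [← (hc.mono kempeGraph_le).ncard_colorsAt, colorsAt_kempeGraph, Set.ncard_le_one_iff]
  rintro j k ⟨hj, rfl | rfl⟩ ⟨hk, rfl | rfl⟩ <;> tauto

section Swap

variable [DecidableEq α]

open Classical in
/-- The Kempe change: the colors `a` and `b` are exchanged on the edges meeting the component of `r`
in `kempeGraph G c a b`. Edges of other colors that meet it are fixed by the transposition. -/
noncomputable def kempeSwap (G : SimpleGraph V) (c : Sym2 V → α) (a b : α) (r : V) (e : Sym2 V) :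
    α :=
  if ∃ w ∈ e, (kempeGraph G c a b).Reachable r w then Equiv.swap a b (c e) else c e

lemma kempeSwap_of_reachable (hw : (kempeGraph G c a b).Reachable r w) :
    kempeSwap G c a b r s(w, x) = Equiv.swap a b (c s(w, x)) :=
  if_pos ⟨w, Sym2.mem_mk_left w x, hw⟩

lemma kempeSwap_of_not_reachable (hw : ¬(kempeGraph G c a b).Reachable r w) (hwx : G.Adj w x) :
    kempeSwap G c a b r s(w, x) = c s(w, x) := by
  by_cases hx : (kempeGraph G c a b).Reachable r x
  · have hcolor : ¬(c s(w, x) = a ∨ c s(w, x) = b) := fun h ↦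
      hw (hx.trans (Adj.reachable (show (kempeGraph G c a b).Adj w x from ⟨hwx, h⟩)).symm)
    rw [not_or] at hcolor
    rw [Sym2.eq_swap, kempeSwap_of_reachable hx, Sym2.eq_swap,
      Equiv.swap_apply_of_ne_of_ne hcolor.1 hcolor.2]
  · refine if_neg ?_
    rintro ⟨z, hz, hrz⟩
    rcases Sym2.mem_iff.1 hz with rfl | rfl
    exacts [hw hrz, hx hrz]

lemma IsProperEdgeColoring.kempeSwap (hc : IsProperEdgeColoring G c) :
    IsProperEdgeColoring G (kempeSwap G c a b r) := by
  intro w z hz y hy hzy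
  dsimp only at hzy
  by_cases hw : (kempeGraph G c a b).Reachable r w
  · rw [kempeSwap_of_reachable hw, kempeSwap_of_reachable hw] at hzy
    exact hc w hz hy ((Equiv.swap a b).injective hzy)
  · rw [kempeSwap_of_not_reachable hw hz, kempeSwap_of_not_reachable hw hy] at hzy
    exact hc w hz hy hzy

lemma mem_colorsAt_kempeSwap_of_reachable (hw : (kempeGraph G c a b).Reachable r w) :
    k ∈ colorsAt G (kempeSwap G c a b r) w ↔ Equiv.swap a b k ∈ colorsAt G c w := by
  simp only [mem_colorsAt, kempeSwap_of_reachable hw, Equiv.swap_apply_eq_iff]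

lemma colorsAt_kempeSwap_of_not_reachable (hw : ¬(kempeGraph G c a b).Reachable r w) :
    colorsAt G (kempeSwap G c a b r) w = colorsAt G c w :=
  Set.image_congr fun _ hz ↦ kempeSwap_of_not_reachable hw hz

end Swap

/-! ### Connected graphs of maximum degree two -/

lemma card_degree_le_one_le_two [Fintype V] [DecidableRel G.Adj] (hG : G.Connected)
    (hdeg : ∀ w, G.degree w ≤ 2) : #{w | G.degree w ≤ 1} ≤ 2 := by
  have hedges : Fintype.card V ≤ #G.edgeFinset + 1 := by
    simpa only [Nat.card_eq_fintype_card, edgeFinset_card] using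
      hG.card_vert_le_card_edgeSet_add_one
  have hsum : ∑ w, (G.degree w + if G.degree w ≤ 1 then 1 else 0) ≤ ∑ _w : V, 2 := by
    refine sum_le_sum fun w _ ↦ ?_
    have := hdeg w
    split_ifs <;> omega
  rw [sum_add_distrib, sum_degrees_eq_twice_card_edges, ← card_filter, sum_const, card_univ,
    smul_eq_mul] at hsum
  omega

lemma not_reachable_of_degree_le_one [Fintype V] [DecidableRel G.Adj] (hdeg : ∀ w, G.degree w ≤ 2)
    (huv : u ≠ v) (hux : u ≠ x) (hvx : v ≠ x) (hu : G.degree u ≤ 1) (hv : G.degree v ≤ 1)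
    (hx : G.degree x ≤ 1) (hreach : G.Reachable u v) : ¬G.Reachable u x := by
  classical
  intro hreach'
  let C := G.connectedComponentMk u
  have hdegC (w : C.supp) : (G.induce C.supp).degree w = G.degree w :=
    degree_induce_of_neighborSet_subset fun _ hz ↦ C.mem_supp_of_adj_mem_supp w.2 hz
  have hends : #{w : C.supp | (G.induce C.supp).degree w ≤ 1} ≤ 2 :=
    card_degree_le_one_le_two C.connected_toSimpleGraph fun w ↦ (hdegC w).trans_le (hdeg w)
  have hmem {w : V} (hw : w ∈ C.supp) (h : G.degree w ≤ 1) :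
      ⟨w, hw⟩ ∈ ({w : C.supp | (G.induce C.supp).degree w ≤ 1} : Finset C.supp) :=
    mem_filter.2 ⟨mem_univ _, (hdegC ⟨w, hw⟩).trans_le h⟩
  exact hends.not_gt <| two_lt_card.2
    ⟨_, hmem rfl hu, _, hmem (ConnectedComponent.sound hreach.symm) hv,
      _, hmem (ConnectedComponent.sound hreach'.symm) hx,
      Subtype.coe_ne_coe.1 huv, Subtype.coe_ne_coe.1 hux, Subtype.coe_ne_coe.1 hvx⟩

/-! ### Proper colorings of graphs of small degree -/

lemma IsProperEdgeColoring.exists_sup_edge_of_kempe [Finite V] (hc : IsProperEdgeColoring G c)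
    (huv : ¬G.Adj u v) (hux : G.Adj u x) (hv : c s(u, x) ∉ colorsAt G c v)
    (hua : a ∉ colorsAt G c u) (hvk : k ∉ colorsAt G c v) (hxk : k ∉ colorsAt G c x) :
    ∃ c' : Sym2 V → α, IsProperEdgeColoring (G ⊔ edge u v) c' := by
  classical
  have := Fintype.ofFinite V
  by_cases hreach : (kempeGraph G c a k).Reachable u v
  · have hux' : ¬(kempeGraph G c a k).Reachable u x := by
      refine not_reachable_of_degree_le_one (fun w ↦ hc.degree_kempeGraph_le_two) ?_ hux.ne ?_
        (hc.degree_kempeGraph_le_one (.inl hua)) (hc.degree_kempeGraph_le_one (.inr hvk))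
        (hc.degree_kempeGraph_le_one (.inr hxk)) hreach
      · rintro rfl
        exact hv (mem_colorsAt_of_adj hux)
      · rintro rfl
        exact huv hux
    have hxu : ¬(kempeGraph G c a k).Reachable x u := fun h ↦ hux' h.symm
    have hxv : ¬(kempeGraph G c a k).Reachable x v := fun h ↦ hux' (hreach.trans h.symm)
    -- After the swap at `x`, the color `a` is missing at both `u` and `x`.
    refine ⟨_, (hc.kempeSwap (a := a) (b := k) (r := x)).sup_edge_of_shift (k := a) hux ?_ ?_ ?_⟩
    · rwa [kempeSwap_of_not_reachable hxu hux, colorsAt_kempeSwap_of_not_reachable hxv]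
    · rwa [colorsAt_kempeSwap_of_not_reachable hxu]
    · rwa [mem_colorsAt_kempeSwap_of_reachable .rfl, Equiv.swap_apply_left]
  · -- After the swap at `u`, the color `k` is missing at both `u` and `v`.
    refine ⟨_, (hc.kempeSwap (a := a) (b := k) (r := u)).sup_edge (k := k) ?_ ?_⟩
    · rwa [mem_colorsAt_kempeSwap_of_reachable .rfl, Equiv.swap_apply_right]
    · rwa [colorsAt_kempeSwap_of_not_reachable hreach]

lemma IsProperEdgeColoring.exists_sup_edge [Fintype V] [DecidableRel G.Adj] [Fintype α]
    (hc : IsProperEdgeColoring G c) (huv : ¬G.Adj u v)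
    (hdeg : ∀ w, G.degree w < Fintype.card α) (hsum : G.degree u + G.degree v ≤ Fintype.card α) :
    ∃ c' : Sym2 V → α, IsProperEdgeColoring (G ⊔ edge u v) c' := by
  classical
  by_cases hunion : colorsAt G c u ∪ colorsAt G c v = Set.univ
  · have hdisj := disjoint_colorsAt hunion hsum
    obtain ⟨a, hua⟩ := exists_notMem_colorsAt (c := c) (hdeg u)
    obtain ⟨b, hvb⟩ := exists_notMem_colorsAt (c := c) (hdeg v)
    have hub : b ∈ colorsAt G c u := (hunion.ge (Set.mem_univ b)).resolve_right hvb
    obtain ⟨x, hux, rfl⟩ := mem_colorsAt.1 hub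
    obtain ⟨k, hxk⟩ := exists_notMem_colorsAt (c := c) (hdeg x)
    by_cases huk : k ∈ colorsAt G c u
    · exact hc.exists_sup_edge_of_kempe huv hux hvb hua (hdisj.notMem_of_mem_left huk) hxk
    · exact ⟨_, hc.sup_edge_of_shift hux hvb huk hxk⟩
  · obtain ⟨k, hk⟩ := (Set.ne_univ_iff_exists_notMem _).1 hunion
    rw [Set.mem_union, not_or] at hk
    exact ⟨_, hc.sup_edge hk.1 hk.2⟩

lemma degree_lt_of_le_of_adj [Fintype (G.neighborSet u)] [Fintype (H.neighborSet u)]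
    (hle : H ≤ G) (hG : G.Adj u v) (hH : ¬H.Adj u v) : H.degree u < G.degree u := by
  rw [← card_neighborSet_eq_degree, ← card_neighborSet_eq_degree]
  exact Set.card_lt_card ⟨fun _ hw ↦ hle hw, fun h ↦ hH (h hG)⟩

lemma exists_isProperEdgeColoring_of_degree_add_le [Fintype V] [DecidableRel G.Adj] [Fintype α]
    (hdeg : ∀ w, G.degree w < Fintype.card α)
    (hsum : ∀ u v, G.Adj u v → G.degree u + G.degree v ≤ Fintype.card α + 2) :
    ∃ c : Sym2 V → α, IsProperEdgeColoring G c := by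
  classical
  induction G using WellFoundedLT.induction generalizing ‹DecidableRel G.Adj› with
  | ind G ih =>
    by_cases hG : ∃ u v, G.Adj u v
    · obtain ⟨u, v, huv⟩ := hG
      let H := G \ edge u v
      have hle : H ≤ G := sdiff_le
      have hH : ¬H.Adj u v := by simp [H, edge_adj, huv.ne]
      have hdegH (w : V) : H.degree w < Fintype.card α := (degree_le_of_le hle).trans_lt (hdeg w)
      obtain ⟨c, hc⟩ := ih H (lt_of_le_not_ge hle fun h ↦ hH (h huv)) hdegH fun y z hyz ↦
        (Nat.add_le_add (degree_le_of_le hle) (degree_le_of_le hle)).trans (hsum y z (hle hyz))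
      have hsumH : H.degree u + H.degree v ≤ Fintype.card α := by
        have hu : H.degree u < G.degree u := degree_lt_of_le_of_adj hle huv hH
        have hv : H.degree v < G.degree v :=
          degree_lt_of_le_of_adj hle huv.symm fun h ↦ hH h.symm
        have := hsum u v huv
        omega
      have hHG : H ⊔ edge u v = G := sdiff_sup_cancel (G.edge_le_iff.2 (.inr huv))
      simpa only [hHG] using hc.exists_sup_edge hH hdegH hsumH
    · obtain _ | ⟨⟨w⟩⟩ := isEmpty_or_nonempty V
      · exact ⟨isEmptyElim, isEmptyElim⟩
      · obtain ⟨k⟩ : Nonempty α := Fintype.card_pos_iff.1 (Nat.zero_lt_of_lt (hdeg w))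
        exact ⟨fun _ ↦ k, fun u v huv ↦ (hG ⟨u, v, huv⟩).elim⟩

/-! ### Splitting vertices -/

section Split

variable {ι : V → Type*} {p : ∀ u, V → ι u}

/-- The graph obtained from `G` by splitting each vertex `u` into the parts `⟨u, i⟩` for `i : ι u`,
where `p u v` is the part of `u` to which the edge `uv` is attached. The values `p u v` for
nonadjacent `u` and `v` are irrelevant. -/
def splitGraph (G : SimpleGraph V) (p : ∀ u, V → ι u) : SimpleGraph (Σ u, ι u) where
  Adj y z := G.Adj y.1 z.1 ∧ p y.1 z.1 = y.2 ∧ p z.1 y.1 = z.2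
  symm := ⟨fun _ _ h ↦ ⟨h.1.symm, h.2.2, h.2.1⟩⟩
  loopless := ⟨fun _ h ↦ h.1.ne rfl⟩

/-- The coloring of the edges of `G` induced by a coloring of the edges of `splitGraph G p`. -/
def splitColoring (p : ∀ u, V → ι u) (c : Sym2 (Σ u, ι u) → α) : Sym2 V → α :=
  Sym2.lift ⟨fun u v ↦ c s(⟨u, p u v⟩, ⟨v, p v u⟩), fun _ _ ↦ congrArg c Sym2.eq_swap⟩

lemma degree_splitGraph_le [Fintype (G.neighborSet u)] [DecidableEq (ι u)] {i : ι u}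
    [Fintype ((splitGraph G p).neighborSet ⟨u, i⟩)] :
    (splitGraph G p).degree ⟨u, i⟩ ≤ #{v ∈ G.neighborFinset u | p u v = i} := by
  rw [← card_neighborFinset_eq_degree]
  refine card_le_card_of_injOn Sigma.fst (fun y hy ↦ ?_) ?_
  · obtain ⟨hadj, hi, -⟩ := (mem_neighborFinset ..).1 hy
    exact mem_filter.2 ⟨(mem_neighborFinset ..).2 hadj, hi⟩
  · rintro ⟨v, j⟩ hy ⟨_, j'⟩ hz rfl
    obtain ⟨-, -, hj⟩ := (mem_neighborFinset ..).1 hy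
    obtain ⟨-, -, hj'⟩ := (mem_neighborFinset ..).1 hz
    exact congrArg (Sigma.mk v) (hj.symm.trans hj')

lemma eq_of_splitColoring_eq {c : Sym2 (Σ u, ι u) → α}
    (hc : IsProperEdgeColoring (splitGraph G p) c) (hv : G.Adj u v) (hw : G.Adj u w)
    (hpart : p u v = p u w) (hcolor : splitColoring p c s(u, v) = splitColoring p c s(u, w)) :
    v = w := by
  refine congrArg Sigma.fst (hc ⟨u, p u v⟩ (x₁ := ⟨v, p v u⟩) (x₂ := ⟨w, p w u⟩)
    ⟨hv, rfl, rfl⟩ ⟨hw, hpart.symm, rfl⟩ ?_)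
  simpa only [splitColoring, Sym2.lift_mk, hpart] using hcolor

lemma card_splitColoring_eq_le [Fintype (G.neighborSet u)] [Fintype (ι u)] [DecidableEq α]
    {c : Sym2 (Σ u, ι u) → α} (hc : IsProperEdgeColoring (splitGraph G p) c) (k : α) :
    #{v ∈ G.neighborFinset u | splitColoring p c s(u, v) = k} ≤ Fintype.card (ι u) := by
  refine card_le_card_of_injOn (p u) (fun _ _ ↦ mem_univ _) fun v hv w hw hpart ↦ ?_
  simp only [coe_filter, mem_neighborFinset, Set.mem_ofPred_eq] at hv hw
  exact eq_of_splitColoring_eq hc hv.1 hw.1 hpart (hv.2.trans hw.2.symm)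

end Split

lemma exists_forall_card_fiber_le {β ι : Type*} [Fintype ι] [Nonempty ι] [DecidableEq ι]
    {s : Finset β} {q : ℕ} (hs : #s ≤ Fintype.card ι * q) :
    ∃ f : β → ι, ∀ i, #{x ∈ s | f x = i} ≤ q := by
  classical
  obtain ⟨g⟩ : Nonempty (s ↪ ι × Fin q) :=
    Function.Embedding.nonempty_of_card_le (by simpa using hs)
  let f (x : β) : ι := if hx : x ∈ s then (g ⟨x, hx⟩).1 else Classical.arbitrary ι
  have hf (x : s) : f x = (g x).1 := dif_pos x.2
  refine ⟨f, fun i ↦ ?_⟩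
  have hinj : Set.InjOn (fun x ↦ (g x).2) {x : s | f x = i} := fun x hx y hy hxy ↦
    g.injective (Prod.ext ((hf x).symm.trans (hx.trans (hy.symm.trans (hf y)))) hxy)
  calc
    #{x ∈ s | f x = i} = #{x : s | f x = i} := by
      rw [univ_eq_attach, filter_attach (f · = i), card_map, card_attach]
    _ ≤ #(univ : Finset (Fin q)) :=
      card_le_card_of_injOn _ (fun _ _ ↦ mem_univ _) (by simpa using hinj)
    _ = q := by rw [card_univ, Fintype.card_fin]

lemma card_filter_incidenceFinset [DecidableEq V] [Fintype (G.neighborSet u)] (P : Sym2 V → Prop)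
    [DecidablePred P] :
    #{e ∈ G.incidenceFinset u | P e} = #{v ∈ G.neighborFinset u | P s(u, v)} := by
  have himage : G.incidenceFinset u = (G.neighborFinset u).image (s(u, ·)) := by
    ext e
    rw [mem_incidenceFinset, mem_image]
    constructor
    · rintro ⟨he, hu⟩
      obtain ⟨v, rfl⟩ := Sym2.mem_iff_exists.1 hu
      exact ⟨v, (mem_neighborFinset ..).2 he, rfl⟩
    · rintro ⟨v, hv, rfl⟩
      exact ⟨(mem_neighborFinset ..).1 hv, Sym2.mem_mk_left u v⟩
  rw [himage, filter_image, card_image_of_injective _ fun _ _ ↦ Sym2.congr_right.1]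

theorem exists_edgeColoring_card_incidence_le [Fintype V] [DecidableEq V] [DecidableRel G.Adj]
    [Fintype α] [DecidableEq α] {q : ℕ} (hq : q < Fintype.card α) (hq' : 2 * q ≤ Fintype.card α + 2)
    {m : V → ℕ} (hm : ∀ u, m u ≠ 0) (hdeg : ∀ u, G.degree u ≤ m u * q) :
    ∃ c : Sym2 V → α, ∀ u k, #{e ∈ G.incidenceFinset u | c e = k} ≤ m u := by
  classical
  have (u : V) : NeZero (m u) := ⟨hm u⟩
  have hparts (u : V) :
      ∃ f : V → Fin (m u), ∀ i, #{v ∈ G.neighborFinset u | f v = i} ≤ q :=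
    exists_forall_card_fiber_le (by simpa using hdeg u)
  choose p hp using hparts
  have hsplit : ∀ y : Σ u, Fin (m u), (splitGraph G p).degree y ≤ q := by
    rintro ⟨u, i⟩
    exact le_trans degree_splitGraph_le (hp u i)
  obtain ⟨c, hc⟩ : ∃ c : Sym2 (Σ u, Fin (m u)) → α, IsProperEdgeColoring (splitGraph G p) c :=
    exists_isProperEdgeColoring_of_degree_add_le (fun y ↦ (hsplit y).trans_lt hq) fun y z _ ↦ by
      have := hsplit y
      have := hsplit z
      omega
  refine ⟨splitColoring p c, fun u k ↦ ?_⟩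
  simpa only [card_filter_incidenceFinset, Fintype.card_fin] using card_splitColoring_eq_le hc k

end MajorityColoring

/-- Every finite simple graph of minimum degree at least `2` has a majority
`4`-edge-coloring: for every vertex `u` and every color `α`, at most half the edges
incident with `u` have color `α`. -/
theorem majority_four_edge_coloring {V : Type*} [Fintype V] [DecidableEq V]
    (G : SimpleGraph V) [DecidableRel G.Adj] (hmin : ∀ v : V, 2 ≤ G.degree v) :
    ∃ c : Sym2 V → Fin 4, ∀ u : V, ∀ α : Fin 4,
      2 * ((G.incidenceFinset u).filter (fun e => c e = α)).card ≤ G.degree u := by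
  have hhalf (u : V) : G.degree u / 2 ≠ 0 := by
    have := hmin u
    omega
  have hthree (u : V) : G.degree u ≤ G.degree u / 2 * 3 := by
    have := hmin u
    omega
  obtain ⟨c, hc⟩ :=
    MajorityColoring.exists_edgeColoring_card_incidence_le (α := Fin 4) (q := 3)
      (by simp) (by simp) hhalf hthree
  exact ⟨c, fun u α ↦ by have := hc u α; omega⟩
end

section
/- Every finite simple graph of minimum degree at least 4 has a majority 3-edge-coloring. -/
/-!
Give the third colour to a set `H` of edges and split the remaining set `F` between the other two.
If the first two colours differ by `b v` in the number of their edges at `v`, the majority condition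
at `v` reads `2 * deg_H v ≤ deg_G v` and `|b v| ≤ deg_H v`.

Hall's theorem provides an `H` with `deg_H v ≤ ⌊deg_G v / 2⌋` everywhere and `1 ≤ deg_H v` where
`deg_G v` is odd: every vertex of odd degree, hence of degree at least `5`, selects an edge to a
neighbour so that `w` is selected at most `⌊deg_G w / 2⌋ - 1` times, which is possible because
`d ≤ 5 * (⌊d / 2⌋ - 1)` for `d ≥ 4`. Enlarging `H` as long as the upper bound permits, we may assume
that every edge of `F` has an end `v` with `deg_H v = ⌊deg_G v / 2⌋ ≥ 2`.

Now colour a longest trail of `F` alternately, remove it, and repeat. A longest trail exhausts the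
edges of `F` at its ends, and leaves every other vertex balanced. If it is closed, so is each of its
rotations, which are also longest; hence it may be assumed to start at a vertex with `deg_H v ≥ 2`.
Thus `|b v| ≤ max 1 (deg_H v)`, and if `deg_H v = 0`, then `deg_F v = deg_G v` is even, so that
`b v`, being even too, vanishes.
-/

open Finset

section

variable {V : Type*}

/-! ### Longest trails -/

/-- A trail whose length is maximal among all trails of the graph, whatever their ends. -/
structure IsLongestTrail {G : SimpleGraph V} {u v : V} (p : G.Walk u v) : Prop where
  isTrail : p.IsTrail
  length_le : ∀ ⦃x y : V⦄ (q : G.Walk x y), q.IsTrail → q.length ≤ p.length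

theorem exists_isLongestTrail (G : SimpleGraph V) [Nonempty V] [Finite G.edgeSet] :
    ∃ (u v : V) (p : G.Walk u v), IsLongestTrail p := by
  have := Fintype.ofFinite G.edgeSet
  let lengths : Set ℕ := {n | ∃ (u v : V) (p : G.Walk u v), p.IsTrail ∧ p.length = n}
  have lengths_nonempty : lengths.Nonempty :=
    let v := Classical.arbitrary V
    ⟨0, v, v, .nil, .nil, rfl⟩
  have lengths_bddAbove : BddAbove lengths := by
    refine ⟨#G.edgeFinset, ?_⟩
    rintro _ ⟨u, v, p, hp, rfl⟩
    exact hp.length_le_card_edgeFinset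
  obtain ⟨u, v, p, hp, hlength⟩ := Nat.sSup_mem lengths_nonempty lengths_bddAbove
  exact ⟨u, v, p, hp, fun x y q hq ↦ hlength ▸ le_csSup lengths_bddAbove ⟨x, y, q, hq, rfl⟩⟩

namespace IsLongestTrail

variable {G : SimpleGraph V} {u v : V} {p : G.Walk u v}

theorem reverse (hp : IsLongestTrail p) : IsLongestTrail p.reverse :=
  ⟨hp.isTrail.reverse, fun _ _ q hq ↦ by simpa using hp.length_le q hq⟩

theorem rotate [DecidableEq V] {c : G.Walk u u} (hc : IsLongestTrail c) {x : V}
    (hx : x ∈ c.support) : IsLongestTrail (c.rotate x hx) :=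
  ⟨hc.isTrail.rotate hx, fun _ _ q hq ↦ by simpa using hc.length_le q hq⟩

theorem mem_edges_of_end_mem (hp : IsLongestTrail p) {e : Sym2 V} (he : e ∈ G.edgeSet)
    (hv : v ∈ e) : e ∈ p.edges := by
  obtain ⟨w, rfl⟩ := Sym2.mem_iff_exists.mp hv
  rw [SimpleGraph.mem_edgeSet] at he
  by_contra hnotMem
  have htrail : (p.concat he).IsTrail := by
    rw [SimpleGraph.Walk.isTrail_def, SimpleGraph.Walk.edges_concat, List.nodup_concat]
    exact ⟨hnotMem, hp.isTrail.edges_nodup⟩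
  have := hp.length_le _ htrail
  simp at this

theorem mem_edges_of_start_mem (hp : IsLongestTrail p) {e : Sym2 V} (he : e ∈ G.edgeSet)
    (hu : u ∈ e) : e ∈ p.edges := by
  simpa using hp.reverse.mem_edges_of_end_mem he hu

theorem edges_ne_nil (hp : IsLongestTrail p) (hG : G ≠ ⊥) : p.edges ≠ [] := by
  obtain ⟨a, b, hab⟩ := SimpleGraph.ne_bot_iff_exists_adj.mp hG
  have : hab.toWalk.length ≤ p.length :=
    hp.length_le _ (by simp [SimpleGraph.Walk.isTrail_def])
  rw [← List.length_pos_iff, SimpleGraph.Walk.length_edges]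
  exact this

end IsLongestTrail

theorem exists_isLongestTrail_start_of_closed (G : SimpleGraph V) [Finite G.edgeSet] (hG : G ≠ ⊥)
    {P : V → Prop} (hP : ∀ e ∈ G.edgeSet, ∃ v ∈ e, P v) :
    ∃ (u v : V) (p : G.Walk u v), IsLongestTrail p ∧ (u = v → P u) := by
  classical
  have : Nonempty V := (SimpleGraph.ne_bot_iff_exists_adj.mp hG).nonempty
  obtain ⟨u, v, p, hp⟩ := exists_isLongestTrail G
  by_cases huv : u = v
  · subst huv
    obtain ⟨e, he⟩ := List.exists_mem_of_ne_nil _ (hp.edges_ne_nil hG)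
    obtain ⟨x, hxe, hx⟩ := hP e (p.edges_subset_edgeSet he)
    have hxp : x ∈ p.support := p.mem_support_of_mem_edges he hxe
    exact ⟨x, x, p.rotate x hxp, hp.rotate hxp, fun _ ↦ hx⟩
  · exact ⟨u, v, p, hp, fun h ↦ absurd h huv⟩

/-! ### Degrees and signed degrees in a set of edges -/

variable [DecidableEq V]

/-- The number of edges in `F` that contain `v`, i.e. the degree of `v` in the graph with edge set
`F`. Subgraphs are represented by their finite edge sets. -/
def incidenceDegree (F : Finset (Sym2 V)) (v : V) : ℕ := #{e ∈ F | v ∈ e}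

/-- The imbalance at `v` of the two-colouring `χ` of `F`: the number of edges in `F` at `v` with
sign `1` minus the number of those with sign `-1`. -/
def signedDegree (χ : Sym2 V → ℤˣ) (F : Finset (Sym2 V)) (v : V) : ℤ :=
  ∑ e ∈ F with v ∈ e, (χ e : ℤ)

section IncidenceDegree

variable {F : Finset (Sym2 V)} {v : V}

theorem incidenceDegree_edgeFinset (G : SimpleGraph V) [Fintype G.edgeSet]
    [Fintype (G.neighborSet v)] : incidenceDegree G.edgeFinset v = G.degree v := by
  rw [incidenceDegree, ← G.incidenceFinset_eq_filter, G.card_incidenceFinset_eq_degree]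

theorem incidenceDegree_mono {F' : Finset (Sym2 V)} (h : F ⊆ F') :
    incidenceDegree F v ≤ incidenceDegree F' v :=
  card_le_card (filter_subset_filter _ h)

theorem incidenceDegree_pos {e : Sym2 V} (he : e ∈ F) (hv : v ∈ e) : 0 < incidenceDegree F v :=
  card_pos.mpr ⟨e, mem_filter.mpr ⟨he, hv⟩⟩

theorem incidenceDegree_sdiff_add {H : Finset (Sym2 V)} (h : H ⊆ F) :
    incidenceDegree (F \ H) v + incidenceDegree H v = incidenceDegree F v := by
  simp only [incidenceDegree, card_filter]
  exact sum_sdiff h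

theorem incidenceDegree_insert_of_mem {e : Sym2 V} (he : e ∉ F) (hv : v ∈ e) :
    incidenceDegree (insert e F) v = incidenceDegree F v + 1 := by
  rw [incidenceDegree, filter_insert, if_pos hv, card_insert_of_notMem (by simp [he]),
    incidenceDegree]

theorem incidenceDegree_insert_of_notMem {e : Sym2 V} (hv : v ∉ e) :
    incidenceDegree (insert e F) v = incidenceDegree F v := by
  rw [incidenceDegree, filter_insert, if_neg hv, incidenceDegree]

theorem incidenceDegree_image_mk_le {ι : Type*} (s : Finset ι) (f g : ι → V) (v : V) :
    incidenceDegree (s.image fun i ↦ s(f i, g i)) v ≤ #{i ∈ s | f i = v} + #{i ∈ s | g i = v} := by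
  classical
  rw [incidenceDegree, filter_image]
  refine card_image_le.trans ?_
  simp only [Sym2.mem_iff, @eq_comm _ v, filter_or]
  exact card_union_le _ _

end IncidenceDegree

section SignedDegree

variable {χ χ' : Sym2 V → ℤˣ} {F : Finset (Sym2 V)} {v : V}

theorem signedDegree_congr (h : ∀ e ∈ F, χ e = χ' e) : signedDegree χ F = signedDegree χ' F := by
  ext v
  exact sum_congr rfl fun e he ↦ by rw [h e (mem_of_mem_filter e he)]

theorem signedDegree_neg (χ : Sym2 V → ℤˣ) (F : Finset (Sym2 V)) :
    signedDegree (-χ) F = -signedDegree χ F := by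
  ext v
  simp [signedDegree]

theorem signedDegree_union {E : Finset (Sym2 V)} (h : Disjoint E F) :
    signedDegree χ (E ∪ F) = signedDegree χ E + signedDegree χ F := by
  ext v
  rw [signedDegree, filter_union, sum_union (disjoint_filter_filter h), Pi.add_apply, signedDegree,
    signedDegree]

theorem signedDegree_singleton {u w : V} (huw : u ≠ w) :
    signedDegree χ {s(u, w)} = Pi.single u (χ s(u, w) : ℤ) + Pi.single w (χ s(u, w) : ℤ) := by
  ext v
  simp only [signedDegree, sum_filter, sum_singleton, Sym2.mem_iff, Pi.add_apply, Pi.single_apply]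
  grind

theorem signedDegree_eq_zero (h : ∀ e ∈ F, v ∉ e) : signedDegree χ F v = 0 := by
  rw [signedDegree, filter_eq_empty_iff.mpr (fun e he ↦ h e he), sum_empty]

theorem two_mul_card_filter_sign (χ : Sym2 V → ℤˣ) (F : Finset (Sym2 V)) (v : V) (ε : ℤˣ) :
    2 * (#{e ∈ F | v ∈ e ∧ χ e = ε} : ℤ) = incidenceDegree F v + ε * signedDegree χ F v := by
  have indicator (a : ℤˣ) : 2 * (if a = ε then 1 else 0 : ℤ) = 1 + ε * a := by
    rcases Int.units_eq_one_or a with rfl | rfl <;>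
      rcases Int.units_eq_one_or ε with rfl | rfl <;> decide
  rw [← filter_filter, natCast_card_filter, mul_sum, incidenceDegree, signedDegree, mul_sum,
    card_eq_sum_ones, Nat.cast_sum, ← sum_add_distrib]
  exact sum_congr rfl fun e _ ↦ by simpa using indicator (χ e)

theorem even_signedDegree_iff : Even (signedDegree χ F v) ↔ Even (incidenceDegree F v) := by
  have h := two_mul_card_filter_sign χ F v 1
  rw [Units.val_one, one_mul] at h
  grind

end SignedDegree

/-! ### Two-colourings of small imbalance -/

theorem exists_alternating_signs {G : SimpleGraph V} {u v : V} (p : G.Walk u v) (hp : p.IsTrail) :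
    ∃ (χ : Sym2 V → ℤˣ) (s : ℤˣ),
      signedDegree χ p.edges.toFinset = Pi.single u 1 + Pi.single v (s : ℤ) := by
  induction p with
  | nil =>
    refine ⟨1, -1, ?_⟩
    rw [Units.val_neg, Units.val_one, ← Pi.single_add]
    ext
    simp [signedDegree]
  | @cons u w v huw q ih =>
    rw [SimpleGraph.Walk.isTrail_cons] at hp
    obtain ⟨hq, hnew⟩ := hp
    obtain ⟨χ, s, hχ⟩ := ih hq
    let χ' : Sym2 V → ℤˣ := fun e ↦ if e = s(u, w) then 1 else -χ e
    have hχ' : ∀ e ∈ q.edges.toFinset, χ' e = (-χ) e := fun e he ↦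
      if_neg (by rintro rfl; exact hnew (List.mem_toFinset.mp he))
    refine ⟨χ', -s, ?_⟩
    rw [SimpleGraph.Walk.edges_cons, List.toFinset_cons, insert_eq,
      signedDegree_union (by simpa using hnew), signedDegree_singleton huw.ne,
      signedDegree_congr hχ', signedDegree_neg, hχ]
    simp only [χ', if_true, Units.val_one, Units.val_neg, Pi.single_neg]
    abel

theorem exists_signed_subset_zero_or_exhausted (G : SimpleGraph V) [Finite G.edgeSet] (hG : G ≠ ⊥)
    {t : V → ℕ} (one_le : ∀ v, 1 ≤ t v) (two_le : ∀ e ∈ G.edgeSet, ∃ v ∈ e, 2 ≤ t v) :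
    ∃ (E : Finset (Sym2 V)) (χ : Sym2 V → ℤˣ), E.Nonempty ∧ ↑E ⊆ G.edgeSet ∧
      ∀ x, signedDegree χ E x = 0 ∨
        |signedDegree χ E x| ≤ t x ∧ ∀ e ∈ G.edgeSet, x ∈ e → e ∈ E := by
  obtain ⟨u, v, p, hp, hclosed⟩ := exists_isLongestTrail_start_of_closed G hG two_le
  obtain ⟨χ, s, hχ⟩ := exists_alternating_signs p hp.isTrail
  refine ⟨p.edges.toFinset, χ, List.toFinset_nonempty_iff _ |>.mpr (hp.edges_ne_nil hG),
    fun e he ↦ p.edges_subset_edgeSet (by simpa using he), fun x ↦ ?_⟩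
  simp only [List.mem_toFinset]
  by_cases hx : x = u ∨ x = v
  · refine .inr ⟨?_, fun e he hxe ↦ ?_⟩
    · have := one_le x
      rw [hχ, Pi.add_apply, Pi.single_apply, Pi.single_apply]
      rcases Int.units_eq_one_or s with rfl | rfl <;> push_cast <;> grind
    · rcases hx with rfl | rfl
      exacts [hp.mem_edges_of_start_mem he hxe, hp.mem_edges_of_end_mem he hxe]
  · push Not at hx
    exact .inl (by simp [hχ, hx.1, hx.2])

theorem exists_abs_signedDegree_le (F : Finset (Sym2 V)) (hF : ∀ e ∈ F, ¬e.IsDiag)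
    {t : V → ℕ} (one_le : ∀ v, 1 ≤ t v) (two_le : ∀ e ∈ F, ∃ v ∈ e, 2 ≤ t v) :
    ∃ χ : Sym2 V → ℤˣ, ∀ v, |signedDegree χ F v| ≤ t v := by
  induction F using Finset.strongInduction with
  | H F ih =>
  obtain rfl | ⟨e₀, he₀⟩ := F.eq_empty_or_nonempty
  · exact ⟨1, by simp [signedDegree]⟩
  let G := SimpleGraph.fromEdgeSet (F : Set (Sym2 V))
  have hG : G.edgeSet = F := by
    rw [SimpleGraph.edgeSet_fromEdgeSet]
    exact sdiff_eq_left.mpr (Set.disjoint_left.mpr hF)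
  have hG_ne_bot : G ≠ ⊥ := by
    rw [← SimpleGraph.edgeSet_nonempty, hG]
    exact ⟨e₀, he₀⟩
  have : Finite G.edgeSet := by rw [hG]; exact F.finite_toSet
  obtain ⟨E, χ₁, hE, hEF, hχ₁⟩ := exists_signed_subset_zero_or_exhausted G hG_ne_bot one_le
    (by simpa [hG] using two_le)
  simp only [hG, coe_subset, mem_coe] at hEF hχ₁
  obtain ⟨χ₂, hχ₂⟩ := ih (F \ E) (sdiff_ssubset hEF hE) (fun e he ↦ hF e (sdiff_subset he))
    fun e he ↦ two_le e (sdiff_subset he)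
  refine ⟨fun e ↦ if e ∈ E then χ₁ e else χ₂ e, fun v ↦ ?_⟩
  rw [← union_sdiff_of_subset hEF, signedDegree_union disjoint_sdiff,
    signedDegree_congr (χ' := χ₁) fun e he ↦ if_pos he,
    signedDegree_congr (χ' := χ₂) fun e he ↦ if_neg (mem_sdiff.mp he).2, Pi.add_apply]
  rcases hχ₁ v with hzero | ⟨hle, hexhausted⟩
  · simpa [hzero] using hχ₂ v
  · have : signedDegree χ₂ (F \ E) v = 0 := signedDegree_eq_zero fun e he hv ↦
      (mem_sdiff.mp he).2 (hexhausted e (mem_sdiff.mp he).1 hv)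
    simpa [this] using hle

/-! ### The third colour class -/

theorem exists_selection_of_card_le_sum {ι α : Type*} [DecidableEq α] (t : ι → Finset α)
    (k : α → ℕ) (hall : ∀ s : Finset ι, #s ≤ ∑ a ∈ s.biUnion t, k a) :
    ∃ f : ι → α, (∀ i, f i ∈ t i) ∧ ∀ (a : α) (s : Finset ι), #{i ∈ s | f i = a} ≤ k a := by
  -- Replace every `a` by `k a` copies of itself.
  let copies : ι → Finset (Σ a, Fin (k a)) := fun i ↦ (t i).sigma fun _ ↦ univ
  have hcopies (s : Finset ι) : #s ≤ #(s.biUnion copies) := by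
    have : s.biUnion copies = (s.biUnion t).sigma fun _ ↦ univ := by
      ext ⟨a, j⟩
      simp [copies]
    simpa [this, card_sigma] using hall s
  obtain ⟨g, hg, hgt⟩ := (all_card_le_biUnion_card_iff_exists_injective copies).mp hcopies
  refine ⟨fun i ↦ (g i).1, fun i ↦ (mem_sigma.mp (hgt i)).1, fun a s ↦ ?_⟩
  have hmaps : ∀ i ∈ ({i ∈ s | (g i).1 = a} : Finset ι),
      g i ∈ ({a} : Finset α).sigma fun a ↦ (univ : Finset (Fin (k a))) := by simp
  simpa using card_le_card_of_injOn g hmaps hg.injOn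

theorem sum_degree_le_sum_degree_biUnion_neighborFinset (G : SimpleGraph V) [G.LocallyFinite]
    (s : Finset V) :
    ∑ v ∈ s, G.degree v ≤ ∑ w ∈ s.biUnion (G.neighborFinset ·), G.degree w := by
  classical
  set N := s.biUnion (G.neighborFinset ·)
  calc ∑ v ∈ s, G.degree v
      = ∑ v ∈ s, #(N.bipartiteAbove G.Adj v) := by
        refine sum_congr rfl fun v hv ↦ ?_
        rw [← G.card_neighborFinset_eq_degree]
        congr 1
        ext w
        simp only [mem_bipartiteAbove, SimpleGraph.mem_neighborFinset, N, mem_biUnion]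
        exact ⟨fun h ↦ ⟨⟨v, hv, h⟩, h⟩, And.right⟩
    _ = ∑ w ∈ N, #(s.bipartiteBelow G.Adj w) :=
        sum_card_bipartiteAbove_eq_sum_card_bipartiteBelow _
    _ ≤ ∑ w ∈ N, G.degree w := by
        refine sum_le_sum fun w _ ↦ ?_
        rw [← G.card_neighborFinset_eq_degree]
        refine card_le_card fun v hv ↦ ?_
        simpa using ((mem_bipartiteBelow _).mp hv).2.symm

theorem exists_selection_of_degree_le_mul (G : SimpleGraph V) [G.LocallyFinite] {d : ℕ}
    (hd : 0 < d) (S : Set V) (le_degree : ∀ v ∈ S, d ≤ G.degree v) (k : V → ℕ)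
    (degree_le : ∀ w, G.degree w ≤ d * k w) :
    ∃ f : S → V, (∀ v : S, G.Adj v (f v)) ∧ ∀ (w : V) (s : Finset S), #{v ∈ s | f v = w} ≤ k w := by
  obtain ⟨f, hf, hcard⟩ := exists_selection_of_card_le_sum
    (fun v : S ↦ G.neighborFinset v) k fun s ↦ by
      let s' : Finset V := s.map (Function.Embedding.subtype _)
      have hs' : s.biUnion (fun v : S ↦ G.neighborFinset v) = s'.biUnion (G.neighborFinset ·) := by
        ext w
        simp [s']
      rw [hs']
      refine Nat.le_of_mul_le_mul_left ?_ hd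
      calc d * #s = ∑ _v ∈ s', d := by simp [s', mul_comm]
        _ ≤ ∑ v ∈ s', G.degree v := sum_le_sum fun v hv ↦ le_degree v <| by
            obtain ⟨v, -, rfl⟩ := mem_map.mp hv
            exact v.2
        _ ≤ ∑ w ∈ s'.biUnion (G.neighborFinset ·), G.degree w :=
            sum_degree_le_sum_degree_biUnion_neighborFinset G s'
        _ ≤ ∑ w ∈ s'.biUnion (G.neighborFinset ·), d * k w := sum_le_sum fun w _ ↦ degree_le w
        _ = d * ∑ w ∈ s'.biUnion (G.neighborFinset ·), k w := (mul_sum _ _ _).symm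
  exact ⟨f, fun v ↦ by simpa using hf v, hcard⟩

theorem exists_superset_saturating {E H₀ : Finset (Sym2 V)} (hH₀ : H₀ ⊆ E) {k : V → ℕ}
    (hk : ∀ v, incidenceDegree H₀ v ≤ k v) :
    ∃ H, H₀ ⊆ H ∧ H ⊆ E ∧ (∀ v, incidenceDegree H v ≤ k v) ∧
      ∀ e ∈ E \ H, ∃ v ∈ e, incidenceDegree H v = k v := by
  have hfinite : {H | H ⊆ E ∧ ∀ v, incidenceDegree H v ≤ k v}.Finite :=
    E.powerset.finite_toSet.subset fun H hH ↦ by simpa using hH.1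
  obtain ⟨H, hH₀H, ⟨hHE, hHk⟩, hmax⟩ := hfinite.exists_le_maximal ⟨hH₀, hk⟩
  refine ⟨H, hH₀H, hHE, hHk, fun e he ↦ ?_⟩
  obtain ⟨heE, heH⟩ := mem_sdiff.mp he
  by_contra! hunsaturated
  refine heH (hmax ⟨insert_subset heE hHE, fun v ↦ ?_⟩ (subset_insert e H) (mem_insert_self e H))
  by_cases hv : v ∈ e
  · rw [incidenceDegree_insert_of_mem heH hv]
    exact (hHk v).lt_of_ne (hunsaturated v hv)
  · rw [incidenceDegree_insert_of_notMem hv]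
    exact hHk v

theorem exists_edges_at_odd_degrees [Fintype V] (G : SimpleGraph V) [DecidableRel G.Adj]
    (hmin : ∀ v, 4 ≤ G.degree v) :
    ∃ H ⊆ G.edgeFinset, (∀ v, incidenceDegree H v ≤ G.degree v / 2) ∧
      ∀ v, Odd (G.degree v) → 0 < incidenceDegree H v := by
  have five_le : ∀ v ∈ {v | Odd (G.degree v)}, 5 ≤ G.degree v := by
    rintro v ⟨k, hk⟩
    have := hmin v
    omega
  obtain ⟨f, hadj, hf⟩ := exists_selection_of_degree_le_mul G (by norm_num) _ five_le
    (fun w ↦ G.degree w / 2 - 1) fun w ↦ by have := hmin w; omega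
  refine ⟨univ.image fun v ↦ s(v.1, f v), ?_, fun w ↦ ?_, fun v hv ↦ ?_⟩
  · simpa [image_subset_iff] using hadj
  · have hselecting (s : Finset {v | Odd (G.degree v)}) : #{v ∈ s | v.1 = w} ≤ 1 :=
      card_le_one.mpr fun a ha b hb ↦ Subtype.ext <| by simp_all only [mem_filter]
    calc incidenceDegree (univ.image fun v ↦ s(v.1, f v)) w
        ≤ 1 + (G.degree w / 2 - 1) :=
          (incidenceDegree_image_mk_le _ _ _ _).trans (add_le_add (hselecting _) (hf w _))
      _ = G.degree w / 2 := by have := hmin w; omega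
  · exact incidenceDegree_pos (mem_image_of_mem _ (mem_univ ⟨v, hv⟩)) (Sym2.mem_mk_left _ _)

theorem exists_third_color_class [Fintype V] (G : SimpleGraph V) [DecidableRel G.Adj]
    (hmin : ∀ v, 4 ≤ G.degree v) :
    ∃ H ⊆ G.edgeFinset, (∀ v, 2 * incidenceDegree H v ≤ G.degree v) ∧
      (∀ v, Odd (G.degree v) → 0 < incidenceDegree H v) ∧
      ∀ e ∈ G.edgeFinset \ H, ∃ v ∈ e, 2 ≤ incidenceDegree H v := by
  obtain ⟨H₀, hH₀G, hH₀_le, hH₀_odd⟩ := exists_edges_at_odd_degrees G hmin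
  obtain ⟨H, hH₀H, hHG, hH_le, hsaturated⟩ := exists_superset_saturating hH₀G hH₀_le
  refine ⟨H, hHG, fun v ↦ ?_, fun v hv ↦ ?_, fun e he ↦ ?_⟩
  · have := hH_le v
    omega
  · exact (hH₀_odd v hv).trans_le (incidenceDegree_mono hH₀H)
  · obtain ⟨v, hv, hdegree⟩ := hsaturated e he
    have := hmin v
    exact ⟨v, hv, by omega⟩

/-! ### The majority colouring -/

/-- The colouring that gives colour `2` to the edges in `H`, and colours `0` and `1` to the other
edges according to their signs. -/
def threeColoring (H : Finset (Sym2 V)) (χ : Sym2 V → ℤˣ) (e : Sym2 V) : Fin 3 :=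
  if e ∈ H then 2 else if χ e = 1 then 0 else 1

section ThreeColoring

variable {H : Finset (Sym2 V)} {χ : Sym2 V → ℤˣ} {e : Sym2 V}

theorem threeColoring_eq_zero_iff : threeColoring H χ e = 0 ↔ e ∉ H ∧ χ e = 1 := by
  rw [threeColoring]
  split_ifs <;> simp_all

theorem threeColoring_eq_one_iff : threeColoring H χ e = 1 ↔ e ∉ H ∧ χ e = -1 := by
  rw [threeColoring]
  rcases Int.units_eq_one_or (χ e) with h | h <;> split_ifs <;> simp_all

theorem threeColoring_eq_two_iff : threeColoring H χ e = 2 ↔ e ∈ H := by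
  rw [threeColoring]
  split_ifs <;> simp_all

theorem two_mul_card_filter_threeColoring_le {E : Finset (Sym2 V)} (hHE : H ⊆ E) {v : V}
    (hH : 2 * incidenceDegree H v ≤ incidenceDegree E v)
    (hχ : |signedDegree χ (E \ H) v| ≤ incidenceDegree H v) (α : Fin 3) :
    2 * #{e ∈ E | v ∈ e ∧ threeColoring H χ e = α} ≤ incidenceDegree E v := by
  have hdegree := incidenceDegree_sdiff_add hHE (v := v)
  have hsigned (ε : ℤˣ) : 2 * #{e ∈ E \ H | v ∈ e ∧ χ e = ε} ≤ incidenceDegree E v := by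
    have hcount := two_mul_card_filter_sign χ (E \ H) v ε
    rw [abs_le] at hχ
    rcases Int.units_eq_one_or ε with rfl | rfl <;> push_cast at hcount <;> omega
  match α with
  | 0 =>
    convert hsigned 1 using 3
    grind [threeColoring_eq_zero_iff]
  | 1 =>
    convert hsigned (-1) using 3
    grind [threeColoring_eq_one_iff]
  | 2 =>
    convert hH using 2
    rw [incidenceDegree]
    congr 1
    grind [threeColoring_eq_two_iff]

end ThreeColoring

end

/-- Every finite simple graph of minimum degree at least `4` has a majority
`3`-edge-coloring: for every vertex `u` and every color `α`, at most half the edges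
incident with `u` have color `α`. -/
theorem majority_three_edge_coloring {V : Type*} [Fintype V] [DecidableEq V]
    (G : SimpleGraph V) [DecidableRel G.Adj] (hmin : ∀ v : V, 4 ≤ G.degree v) :
    ∃ c : Sym2 V → Fin 3, ∀ u : V, ∀ α : Fin 3,
      2 * ((G.incidenceFinset u).filter (fun e => c e = α)).card ≤ G.degree u := by
  obtain ⟨H, hHG, hhalf, hodd, htwo⟩ := exists_third_color_class G hmin
  obtain ⟨χ, hχ⟩ := exists_abs_signedDegree_le (G.edgeFinset \ H)
    (fun e he ↦ G.not_isDiag_of_mem_edgeFinset (sdiff_subset he))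
    (t := fun v ↦ max 1 (incidenceDegree H v)) (fun v ↦ le_max_left _ _)
    (fun e he ↦ (htwo e he).imp fun v hv ↦ hv.imp_right le_max_of_le_right)
  refine ⟨threeColoring H χ, fun u α ↦ ?_⟩
  have hbalance : |signedDegree χ (G.edgeFinset \ H) u| ≤ incidenceDegree H u := by
    have hu := hχ u
    obtain hzero | hpos := (incidenceDegree H u).eq_zero_or_pos
    · have heven : Even (signedDegree χ (G.edgeFinset \ H) u) := by
        have hdegree := incidenceDegree_sdiff_add hHG (v := u)
        rw [hzero, add_zero, incidenceDegree_edgeFinset] at hdegree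
        rw [even_signedDegree_iff, hdegree, ← Nat.not_odd_iff_even]
        exact fun h ↦ (hodd u h).ne' hzero
      grind
    · rwa [max_eq_right hpos] at hu
  rw [G.incidenceFinset_eq_filter, filter_filter, ← incidenceDegree_edgeFinset]
  exact two_mul_card_filter_threeColoring_le hHG
    (by simpa only [incidenceDegree_edgeFinset] using hhalf u) hbalance α
end

section
/- For every integer k at least 2, there exists a positive integer δ_k such that every finite simple graph of minimum degree at least δ_k has a (1/k)-majority (k+1)-edge-coloring. -/
/-!
Orient the edges of `G` arbitrarily and let each edge join the out-copy of its tail to the in-copy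
of its head, so that the edges of `G` form a bipartite graph. A bipartite multigraph has an edge
coloring with `K` colors in which each color appears at most `⌈d / K⌉` times at a vertex of
degree `d`: split every vertex into pieces of degree at most `K` and apply König's edge-coloring
theorem. The latter holds because a multigraph of maximum degree `K` embeds into a `K`-regular one,
from which Hall's theorem removes one perfect matching after another. With `K = k + 1`, a vertex of
`G` with out-degree `p` and in-degree `q` then sees each color at most
`⌈p / K⌉ + ⌈q / K⌉ ≤ (p + q + 2 k) / (k + 1)` times, and this is at most `(p + q) / k` once
`p + q ≥ 2 k ^ 2`.

A bipartite multigraph is given by two maps `a : E → A` and `b : E → B` sending an edge to its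
endpoints, and a coloring `c` is proper on the side of `a` if `e ↦ (a e, c e)` is injective.
-/

open Finset

section Regular

variable {E A B : Type*} {a : E → A} {b : E → B} {S M : Finset E} {K : ℕ}

theorem injOn_prodMk_piecewise [DecidableEq E] {c : E → ℕ} (haM : Set.InjOn a M)
    (hc : ∀ e ∈ S \ M, c e < K) (hac : Set.InjOn (fun e => (a e, c e)) ↑(S \ M)) :
    Set.InjOn (fun e => (a e, M.piecewise (fun _ => K) c e)) S := by
  intro e he f hf hef
  obtain ⟨ha_eq, hc_eq⟩ := Prod.mk.inj hef
  by_cases heM : e ∈ M <;> by_cases hfM : f ∈ M <;>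
    simp only [piecewise, heM, hfM, if_true, if_false] at hc_eq
  · exact haM heM hfM ha_eq
  · exact absurd hc_eq (hc f (mem_sdiff.mpr ⟨hf, hfM⟩)).ne'
  · exact absurd hc_eq (hc e (mem_sdiff.mpr ⟨he, heM⟩)).ne
  · exact hac (mem_sdiff.mpr ⟨he, heM⟩) (mem_sdiff.mpr ⟨hf, hfM⟩) (Prod.ext ha_eq hc_eq)

variable [DecidableEq A]

theorem card_filter_sdiff_add_one_of_bijOn [DecidableEq E] (hMS : M ⊆ S)
    (haM : Set.BijOn a M Set.univ) (x : A) :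
    #{e ∈ S \ M | a e = x} + 1 = #{e ∈ S | a e = x} := by
  obtain ⟨m, hm, rfl⟩ := haM.surjOn (Set.mem_univ x)
  have filter_sdiff : {e ∈ S \ M | a e = a m} = {e ∈ S | a e = a m}.erase m := by
    ext e
    have mem_iff (hae : a e = a m) : e ∈ M ↔ e = m :=
      ⟨fun he => haM.injOn he hm hae, fun he => he ▸ hm⟩
    grind
  rw [filter_sdiff]
  exact card_erase_add_one (mem_filter.mpr ⟨hMS hm, rfl⟩)

theorem finite_of_card_fiber_pos (ha : ∀ x, 0 < #{e ∈ S | a e = x}) : Finite A := by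
  refine Finite.of_surjective (fun e : S => a e) fun x => ?_
  obtain ⟨e, he⟩ := card_pos.mp (ha x)
  exact ⟨⟨e, (mem_filter.mp he).1⟩, (mem_filter.mp he).2⟩

variable [DecidableEq B]

theorem card_le_card_of_le_card_fiber_of_card_fiber_le {X : Finset A} {Y : Finset B} (hK : 0 < K)
    (ha : ∀ x ∈ X, K ≤ #{e ∈ S | a e = x}) (hb : ∀ y ∈ Y, #{e ∈ S | b e = y} ≤ K)
    (hXY : ∀ e ∈ S, a e ∈ X → b e ∈ Y) : #X ≤ #Y := by
  refine Nat.le_of_mul_le_mul_right ?_ hK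
  calc #X * K
      ≤ ∑ x ∈ X, #{e ∈ S | a e = x} := card_nsmul_le_sum _ _ _ ha
    _ = #{e ∈ S | a e ∈ X} := sum_card_fiberwise_eq_card_filter ..
    _ ≤ #{e ∈ S | b e ∈ Y} := by
      refine card_le_card fun e he => ?_
      rw [mem_filter] at he ⊢
      exact ⟨he.1, hXY e he.1 he.2⟩
    _ = ∑ y ∈ Y, #{e ∈ S | b e = y} := (sum_card_fiberwise_eq_card_filter ..).symm
    _ ≤ #Y * K := sum_le_card_nsmul _ _ _ hb

theorem exists_perfect_matching_of_regular (hK : 0 < K) (ha : ∀ x, #{e ∈ S | a e = x} = K)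
    (hb : ∀ y, #{e ∈ S | b e = y} = K) :
    ∃ M ⊆ S, Set.BijOn a M Set.univ ∧ Set.BijOn b M Set.univ := by
  classical
  have : Finite A := finite_of_card_fiber_pos fun x => hK.trans_eq (ha x).symm
  have : Finite B := finite_of_card_fiber_pos fun y => hK.trans_eq (hb y).symm
  have := Fintype.ofFinite A
  have := Fintype.ofFinite B
  have hall (X : Finset A) : #X ≤ #(X.biUnion fun x => {e ∈ S | a e = x}.image b) := by
    refine card_le_card_of_le_card_fiber_of_card_fiber_le hK (fun x _ => (ha x).ge)
      (fun y _ => (hb y).le) fun e he heX => ?_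
    exact mem_biUnion.mpr ⟨a e, heX, mem_image_of_mem b (mem_filter.mpr ⟨he, rfl⟩)⟩
  obtain ⟨f, f_injective, hf⟩ := (all_card_le_biUnion_card_iff_exists_injective _).mp hall
  have card_le : Fintype.card B ≤ Fintype.card A :=
    card_le_card_of_le_card_fiber_of_card_fiber_le hK (fun y _ => (hb y).ge)
      (fun x _ => (ha x).le) fun _ _ _ => mem_univ _
  have f_bijective : f.Bijective :=
    f_injective.bijective_of_nat_card_le (by simpa only [Nat.card_eq_fintype_card] using card_le)
  simp only [mem_image, mem_filter, and_assoc] at hf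
  choose m hmS ham hbm using hf
  have m_injective : m.Injective := Function.LeftInverse.injective ham
  refine ⟨univ.image m, image_subset_iff.mpr fun x _ => hmS x, ?_, ?_⟩ <;>
    rw [coe_image, coe_univ, ← Set.bijOn_comp_iff m_injective.injOn, Set.bijOn_univ]
  · rw [show a ∘ m = id from funext ham]
    exact Function.bijective_id
  · rwa [show b ∘ m = f from funext hbm]

theorem exists_proper_coloring_of_regular (ha : ∀ x, #{e ∈ S | a e = x} = K)
    (hb : ∀ y, #{e ∈ S | b e = y} = K) :
    ∃ c : E → ℕ, (∀ e ∈ S, c e < K) ∧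
      Set.InjOn (fun e => (a e, c e)) S ∧ Set.InjOn (fun e => (b e, c e)) S := by
  classical
  induction K generalizing S with
  | zero =>
    have S_empty : S = ∅ := eq_empty_of_forall_notMem fun e he =>
      (filter_eq_empty_iff.mp (card_eq_zero.mp (ha (a e)))) he rfl
    simp [S_empty]
  | succ K ih =>
    obtain ⟨M, hMS, haM, hbM⟩ := exists_perfect_matching_of_regular K.succ_pos ha hb
    obtain ⟨c, hc, hac, hbc⟩ := ih
      (fun x => Nat.succ.inj ((card_filter_sdiff_add_one_of_bijOn hMS haM x).trans (ha x)))
      (fun y => Nat.succ.inj ((card_filter_sdiff_add_one_of_bijOn hMS hbM y).trans (hb y)))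
    refine ⟨M.piecewise (fun _ => K) c, fun e he => ?_,
      injOn_prodMk_piecewise haM.injOn hc hac, injOn_prodMk_piecewise hbM.injOn hc hbc⟩
    by_cases heM : e ∈ M
    · simp [heM]
    · simpa [heM] using (hc e (mem_sdiff.mpr ⟨he, heM⟩)).trans K.lt_succ_self

end Regular

section Konig

variable {E F A B V : Type*} [Fintype E]

theorem card_filter_sum_type [Fintype F] (p : E ⊕ F → Prop) [DecidablePred p] :
    #{e | p e} = #{e | p (Sum.inl e)} + #{f | p (Sum.inr f)} := by
  simp only [card_filter, Fintype.sum_sum_type]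

theorem card_filter_sigma_fst_eq [Fintype V] [DecidableEq V] (n : V → ℕ) (v : V) :
    #{p : Σ v, Fin (n v) | p.1 = v} = n v := by
  rw [card_filter, Fintype.sum_sigma, Fintype.sum_eq_single v (by simp +contextual)]
  simp

theorem exists_proper_coloring_of_card_fiber_eq [Finite V] [DecidableEq V] {s t : E → V} {K : ℕ}
    (hst : ∀ v, #{e | t e = v} = #{e | s e = v}) (hK : ∀ v, #{e | s e = v} ≤ K) :
    ∃ c : E → Fin K, (fun e => (s e, c e)).Injective ∧ (fun e => (t e, c e)).Injective := by
  have := Fintype.ofFinite V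
  let deficiency (v : V) : ℕ := K - #{e | s e = v}
  let loop : (Σ v, Fin (deficiency v)) → V := Sigma.fst
  have card_source (v : V) : #{e | Sum.elim s loop e = v} = K := by
    rw [card_filter_sum_type]
    exact (congrArg _ (card_filter_sigma_fst_eq deficiency v)).trans (Nat.add_sub_cancel' (hK v))
  have card_target (v : V) : #{e | Sum.elim t loop e = v} = K := by
    rw [← card_source v, card_filter_sum_type, card_filter_sum_type]
    exact congrArg (· + _) (hst v)
  obtain ⟨c, hc, hsc, htc⟩ := exists_proper_coloring_of_regular card_source card_target
  rw [coe_univ, Set.injOn_univ] at hsc htc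
  refine ⟨fun e => ⟨c (Sum.inl e), hc _ (mem_univ _)⟩,
    fun e f hef => Sum.inl_injective (hsc ?_), fun e f hef => Sum.inl_injective (htc ?_)⟩ <;>
    simpa using hef

/-- **König's edge-coloring theorem**. Directing every edge both ways equates the in-degree and the
out-degree of every vertex, so that loops suffice to reach a regular multigraph. -/
theorem exists_proper_coloring_of_card_fiber_le [DecidableEq A] [DecidableEq B] {a : E → A}
    {b : E → B} {K : ℕ} (ha : ∀ x, #{e | a e = x} ≤ K) (hb : ∀ y, #{e | b e = y} ≤ K) :
    ∃ c : E → Fin K, (fun e => (a e, c e)).Injective ∧ (fun e => (b e, c e)).Injective := by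
  let s : E ⊕ E → Set.range a ⊕ Set.range b :=
    Sum.map (Set.rangeFactorization a) (Set.rangeFactorization b)
  have card_swap (v) : #{e : E ⊕ E | s e.swap = v} = #{e | s e = v} :=
    card_equiv (Equiv.sumComm E E) (by simp)
  have card_le (v) : #{e | s e = v} ≤ K := by
    rcases v with ⟨x, _⟩ | ⟨y, _⟩
    · simpa [s, card_filter_sum_type, Set.rangeFactorization] using ha x
    · simpa [s, card_filter_sum_type, Set.rangeFactorization] using hb y
  obtain ⟨c, hsc, htc⟩ := exists_proper_coloring_of_card_fiber_eq card_swap card_le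
  refine ⟨c ∘ Sum.inl,
    fun e f hef => Sum.inl_injective (hsc ?_), fun e f hef => Sum.inl_injective (htc ?_)⟩ <;>
    simpa [s, Set.rangeFactorization] using hef

end Konig

section Balanced

variable {E A B : Type*}

theorem exists_injective_prodMk_lt_card_fiber [Fintype E] [DecidableEq A] (a : E → A) :
    ∃ r : E → ℕ, (∀ e, r e < #{f | a f = a e}) ∧ (fun e => (a e, r e)).Injective := by
  classical
  refine ⟨fun e => List.idxOf e (toList {f | a f = a e}), fun e => ?_, fun e f hef => ?_⟩
  · rw [← length_toList, List.idxOf_lt_length_iff]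
    simp
  · obtain ⟨ha, hidx⟩ := Prod.mk.inj hef
    simp only [ha] at hidx
    exact (List.idxOf_inj (by simp [ha])).mp hidx

theorem card_fiber_prodMk_div_le [Fintype E] [DecidableEq A] {a : E → A} {r : E → ℕ} {K : ℕ}
    (hK : 0 < K) (har : (fun e => (a e, r e)).Injective) (p : A × ℕ) :
    #{e | (a e, r e / K) = p} ≤ K := by
  calc #{e | (a e, r e / K) = p}
      ≤ #(range K) := card_le_card_of_injOn (r · % K) (by simp [Set.MapsTo, Nat.mod_lt _ hK]) ?_
    _ = K := card_range K
  intro e he f hf hmod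
  simp only [coe_filter, mem_univ, true_and, Set.mem_ofPred_eq] at he hf
  obtain ⟨ha, hdiv⟩ := Prod.mk.inj (he.trans hf.symm)
  exact har (Prod.ext ha (Nat.ext_div_mod hdiv hmod))

-- The map `r / K` cuts a fiber of size `d` into `⌈d / K⌉` pieces, each with at most one edge per
-- color.
theorem card_fiber_color_le_ceilDiv {C : Type*} [Fintype E] [DecidableEq A] [DecidableEq C]
    {a : E → A} {r : E → ℕ} {c : E → C} {K : ℕ} (hK : 0 < K) (hr : ∀ e, r e < #{f | a f = a e})
    (hc : (fun e => ((a e, r e / K), c e)).Injective) (x : A) (i : C) :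
    #{e | a e = x ∧ c e = i} ≤ #{e | a e = x} ⌈/⌉ K := by
  calc #{e | a e = x ∧ c e = i}
      ≤ #(range (#{e | a e = x} ⌈/⌉ K)) := card_le_card_of_injOn (r · / K) ?_ ?_
    _ = #{e | a e = x} ⌈/⌉ K := card_range _
  · intro e he
    obtain ⟨rfl, -⟩ : a e = x ∧ c e = i := by simpa using he
    rw [coe_range, Set.mem_Iio, ← not_le, ceilDiv_le_iff_le_mul hK, not_le]
    exact (Nat.mul_div_le _ _).trans_lt (hr e)
  · intro e he f hf hdiv
    obtain ⟨hae, hce⟩ : a e = x ∧ c e = i := by simpa using he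
    obtain ⟨haf, hcf⟩ : a f = x ∧ c f = i := by simpa using hf
    exact hc (Prod.ext (Prod.ext (hae.trans haf.symm) hdiv) (hce.trans hcf.symm))

theorem exists_balanced_coloring [Fintype E] [DecidableEq A] [DecidableEq B] (a : E → A)
    (b : E → B) {K : ℕ} (hK : 0 < K) :
    ∃ c : E → Fin K,
      (∀ x i, #{e | a e = x ∧ c e = i} ≤ #{e | a e = x} ⌈/⌉ K) ∧
      (∀ y i, #{e | b e = y ∧ c e = i} ≤ #{e | b e = y} ⌈/⌉ K) := by
  obtain ⟨r, hr, har⟩ := exists_injective_prodMk_lt_card_fiber a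
  obtain ⟨s, hs, hbs⟩ := exists_injective_prodMk_lt_card_fiber b
  obtain ⟨c, hac, hbc⟩ := exists_proper_coloring_of_card_fiber_le
    (card_fiber_prodMk_div_le hK har) (card_fiber_prodMk_div_le hK hbs)
  exact ⟨c, card_fiber_color_le_ceilDiv hK hr hac, card_fiber_color_le_ceilDiv hK hs hbc⟩

theorem exists_balanced_coloring_finset [DecidableEq A] [DecidableEq B] (S : Finset E) (a : E → A)
    (b : E → B) {K : ℕ} (hK : 0 < K) :
    ∃ c : E → Fin K,
      (∀ x i, #{e ∈ S | a e = x ∧ c e = i} ≤ #{e ∈ S | a e = x} ⌈/⌉ K) ∧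
      (∀ y i, #{e ∈ S | b e = y ∧ c e = i} ≤ #{e ∈ S | b e = y} ⌈/⌉ K) := by
  have card_subtype (p : E → Prop) [DecidablePred p] : #{e : S | p e} = #{e ∈ S | p e} := by
    rw [univ_eq_attach, filter_attach, card_map, card_attach]
  obtain ⟨c, hac, hbc⟩ := exists_balanced_coloring (fun e : S => a e) (fun e : S => b e) hK
  let c' := Function.extend Subtype.val c fun _ => ⟨0, hK⟩
  have extend_eq (e : S) : c' e = c e := Subtype.val_injective.extend_apply c _ e
  simp only [← extend_eq] at hac hbc
  refine ⟨c', fun x i => ?_, fun y i => ?_⟩ <;> rw [← card_subtype, ← card_subtype]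
  exacts [hac x i, hbc y i]

end Balanced

section Graph

variable {V : Type*} [Fintype V] [DecidableEq V] (G : SimpleGraph V) [DecidableRel G.Adj]

theorem card_filter_incidenceFinset (u : V) (p : Sym2 V → Prop) [DecidablePred p] :
    #{e ∈ G.incidenceFinset u | p e} =
      #{e ∈ G.edgeFinset | e.out.1 = u ∧ p e} + #{e ∈ G.edgeFinset | e.out.2 = u ∧ p e} := by
  have out_eq (e : Sym2 V) : s(e.out.1, e.out.2) = e := e.out_eq
  have mem_iff (e : Sym2 V) : u ∈ e ↔ e.out.1 = u ∨ e.out.2 = u := by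
    rw [eq_comm, eq_comm (b := u), ← Sym2.mem_iff, out_eq]
  have out_ne {e : Sym2 V} (he : e ∈ G.edgeFinset) : e.out.1 ≠ e.out.2 := by
    rw [← out_eq e, SimpleGraph.mem_edgeFinset, SimpleGraph.mem_edgeSet] at he
    exact he.ne
  rw [← card_union_of_disjoint, ← filter_or, G.incidenceFinset_eq_filter, filter_filter]
  · simp only [mem_iff, or_and_right]
  · exact disjoint_filter.mpr fun e he hfst hsnd => out_ne he (hfst.1.trans hsnd.1.symm)

theorem exists_edge_coloring_mul_card_le (k : ℕ) :
    ∃ c : Sym2 V → Fin (k + 1), ∀ u i,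
      (k + 1) * #{e ∈ G.incidenceFinset u | c e = i} ≤ G.degree u + 2 * k := by
  obtain ⟨c, hout, hin⟩ :=
    exists_balanced_coloring_finset G.edgeFinset (·.out.1) (·.out.2) k.succ_pos
  have mul_ceilDiv_le (d : ℕ) : (k + 1) * (d ⌈/⌉ (k + 1)) ≤ d + k := Nat.mul_div_le (d + k) (k + 1)
  refine ⟨c, fun u i => ?_⟩
  have degree_eq :
      G.degree u = #{e ∈ G.edgeFinset | e.out.1 = u} + #{e ∈ G.edgeFinset | e.out.2 = u} := by
    simpa using card_filter_incidenceFinset G u fun _ => True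
  set p := #{e ∈ G.edgeFinset | e.out.1 = u}
  set q := #{e ∈ G.edgeFinset | e.out.2 = u}
  calc (k + 1) * #{e ∈ G.incidenceFinset u | c e = i}
      ≤ (k + 1) * (p ⌈/⌉ (k + 1) + q ⌈/⌉ (k + 1)) := by
        rw [card_filter_incidenceFinset]
        exact Nat.mul_le_mul_left _ (Nat.add_le_add (hout u i) (hin u i))
    _ ≤ (p + k) + (q + k) := by
        rw [mul_add]
        exact Nat.add_le_add (mul_ceilDiv_le p) (mul_ceilDiv_le q)
    _ = G.degree u + 2 * k := by rw [degree_eq]; ring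

end Graph

/-- For every integer `k ≥ 2` there is a positive integer `δ_k` such that
every finite simple graph of minimum degree at least `δ_k` has a `(1/k)`-majority
`(k+1)`-edge-coloring: for every vertex `u` and every color `α`, at most a `1/k`-fraction
of the edges incident with `u` have color `α`. -/
theorem inv_k_majority_k_add_one_coloring (k : ℕ) (hk : 2 ≤ k) :
    ∃ δ : ℕ, 0 < δ ∧
      ∀ (V : Type) [Fintype V] [DecidableEq V] (G : SimpleGraph V) [DecidableRel G.Adj],
        (∀ v : V, δ ≤ G.degree v) →
        ∃ c : Sym2 V → Fin (k + 1), ∀ u : V, ∀ α : Fin (k + 1),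
          k * ((G.incidenceFinset u).filter (fun e => c e = α)).card ≤ G.degree u := by
  refine ⟨2 * k ^ 2, by positivity, fun V _ _ G _ hδ => ?_⟩
  obtain ⟨c, hc⟩ := exists_edge_coloring_mul_card_le G k
  refine ⟨c, fun u α => Nat.le_of_mul_le_mul_left ?_ k.succ_pos⟩
  calc (k + 1) * (k * #{e ∈ G.incidenceFinset u | c e = α})
      = k * ((k + 1) * #{e ∈ G.incidenceFinset u | c e = α}) := by ring
    _ ≤ k * (G.degree u + 2 * k) := Nat.mul_le_mul_left k (hc u α)
    _ = k * G.degree u + 2 * k ^ 2 := by ring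
    _ ≤ k * G.degree u + G.degree u := Nat.add_le_add_left (hδ u) _
    _ = (k + 1) * G.degree u := by ring
end

section
/- Let G be a finite simple graph of minimum degree at least 3, and let D' and A be disjoint sets of vertices of G such that every neighbor of every vertex of D' belongs to A. Then it is possible to select, for every vertex u in D', exactly one edge of G incident with u, in such a way that every vertex v in A is incident with at most ⌊d_G(v)/2⌋ of the selected edges. -/
/-!
Give every vertex `v` exactly `⌊d(v)/2⌋` slots and let each vertex of `D'` compete for the slots of
its neighbors. A finite set `S ⊆ D'` sends out at least `3|S|` edges, and each `v ∈ N(S)` receives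
at most `d(v) ≤ 3⌊d(v)/2⌋` of them, an inequality that fails only for `d(v) = 1`. Hence `N(S)` has
at least `|S|` slots, and Hall's theorem assigns distinct slots to the vertices of `D'`.
Each of them selects the edge to the owner of its slot. A vertex outside `D'` can meet a selected
edge only as such an owner.
-/

open Finset

section HallCapacities

variable {ι β : Type*} {t : ι → Finset β} {c : β → ℕ}

theorem exists_forall_mem_encard_fiber_le_of_card_le_sum_biUnion [DecidableEq β]
    (hall : ∀ S : Finset ι, #S ≤ ∑ b ∈ S.biUnion t, c b) :
    ∃ f : ι → β, (∀ i, f i ∈ t i) ∧ ∀ b, (f ⁻¹' {b}).encard ≤ c b := by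
  let slots (i : ι) : Finset (Σ _ : β, ℕ) := (t i).sigma fun b => range (c b)
  have hall_slots (S : Finset ι) : #S ≤ #(S.biUnion slots) := by
    have biUnion_slots : S.biUnion slots = (S.biUnion t).sigma fun b => range (c b) := by
      ext ⟨b, n⟩
      simp only [slots, mem_biUnion, mem_sigma]
      tauto
    simpa only [biUnion_slots, card_sigma, card_range] using hall S
  obtain ⟨g, g_injective, g_mem⟩ :=
    (all_card_le_biUnion_card_iff_exists_injective slots).1 hall_slots
  simp only [slots, mem_sigma, mem_range] at g_mem
  refine ⟨fun i => (g i).1, fun i => (g_mem i).1, fun b => ?_⟩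
  have slot_mapsTo : Set.MapsTo (fun i => (g i).2) {i | (g i).1 = b} (range (c b)) := by
    rintro i rfl
    exact mem_coe.2 (mem_range.2 (g_mem i).2)
  have slot_injOn : Set.InjOn (fun i => (g i).2) {i | (g i).1 = b} := fun i hi j hj hij =>
    g_injective (Sigma.ext (hi.trans hj.symm) (heq_of_eq hij))
  calc {i | (g i).1 = b}.encard ≤ (range (c b) : Set ℕ).encard :=
        Set.encard_le_encard_of_injOn slot_mapsTo slot_injOn
    _ = c b := by rw [Set.encard_coe_eq_coe_finsetCard, card_range]

theorem card_le_sum_biUnion_of_le_card_of_encard_le [DecidableEq β] {k : ℕ} (hk : 0 < k)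
    (le_card : ∀ i, k ≤ #(t i)) (encard_le : ∀ b, {i | b ∈ t i}.encard ≤ (k * c b : ℕ))
    (S : Finset ι) : #S ≤ ∑ b ∈ S.biUnion t, c b := by
  have card_below_le (b : β) : #{i ∈ S | b ∈ t i} ≤ k * c b := by
    rw [← Nat.cast_le (α := ℕ∞), ← Set.encard_coe_eq_coe_finsetCard]
    refine le_trans (Set.encard_le_encard ?_) (encard_le b)
    exact fun i hi => (mem_filter.1 (mem_coe.1 hi)).2
  have above_eq {i : ι} (hi : i ∈ S) : {b ∈ S.biUnion t | b ∈ t i} = t i := by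
    rw [filter_mem_eq_inter, inter_eq_right]
    exact subset_biUnion_of_mem t hi
  refine Nat.le_of_mul_le_mul_left ?_ hk
  calc k * #S = ∑ _i ∈ S, k := by rw [sum_const, smul_eq_mul, mul_comm]
    _ ≤ ∑ i ∈ S, #{b ∈ S.biUnion t | b ∈ t i} :=
        sum_le_sum fun i hi => (le_card i).trans_eq (congrArg card (above_eq hi).symm)
    _ = ∑ b ∈ S.biUnion t, #{i ∈ S | b ∈ t i} :=
        sum_card_bipartiteAbove_eq_sum_card_bipartiteBelow fun i b => b ∈ t i
    _ ≤ ∑ b ∈ S.biUnion t, k * c b := sum_le_sum fun b _ => card_below_le b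
    _ = k * ∑ b ∈ S.biUnion t, c b := (mul_sum _ _ _).symm

theorem exists_forall_mem_encard_fiber_le_of_le_card_of_encard_le {k : ℕ} (hk : 0 < k)
    (le_card : ∀ i, k ≤ #(t i)) (encard_le : ∀ b, {i | b ∈ t i}.encard ≤ (k * c b : ℕ)) :
    ∃ f : ι → β, (∀ i, f i ∈ t i) ∧ ∀ b, (f ⁻¹' {b}).encard ≤ c b := by
  classical
  exact exists_forall_mem_encard_fiber_le_of_card_le_sum_biUnion
    (card_le_sum_biUnion_of_le_card_of_encard_le hk le_card encard_le)

end HallCapacities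

section LocallyFinite

variable {V : Type*} (G : SimpleGraph V) [G.LocallyFinite]

theorem encard_setOf_mem_neighborFinset_le_degree (D : Set V) (v : V) :
    {u : D | v ∈ G.neighborFinset u}.encard ≤ G.degree v := by
  rw [← Subtype.val_injective.encard_image, ← G.card_neighborFinset_eq_degree,
    ← Set.encard_coe_eq_coe_finsetCard]
  refine Set.encard_le_encard ?_
  rintro _ ⟨u, huv, rfl⟩
  exact mem_coe.2 ((G.mem_neighborFinset _ _).2 ((G.mem_neighborFinset _ _).1 huv).symm)

variable {D : Set V}

theorem exists_adj_encard_fiber_le_half_degree (three_le_degree : ∀ u ∈ D, 3 ≤ G.degree u)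
    (degree_ne_one : ∀ u ∈ D, ∀ v, G.Adj u v → G.degree v ≠ 1) :
    ∃ f : V → V, (∀ u ∈ D, G.Adj u (f u)) ∧
      ∀ v, {u ∈ D | f u = v}.encard ≤ (G.degree v / 2 : ℕ) := by
  have encard_le (v : V) :
      {u : D | v ∈ G.neighborFinset u}.encard ≤ (3 * (G.degree v / 2) : ℕ) := by
    obtain no_neighbor | ⟨u, huv⟩ := {u : D | v ∈ G.neighborFinset u}.eq_empty_or_nonempty
    · rw [no_neighbor, Set.encard_empty]
      exact zero_le
    · have := degree_ne_one u u.2 v ((G.mem_neighborFinset _ _).1 huv)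
      exact (encard_setOf_mem_neighborFinset_le_degree G D v).trans (Nat.cast_le.2 (by lia))
  obtain ⟨f, f_mem, encard_fiber_le⟩ :=
    exists_forall_mem_encard_fiber_le_of_le_card_of_encard_le
      (t := fun u : D => G.neighborFinset u) three_pos
      (fun u => three_le_degree u u.2) encard_le
  obtain ⟨f, rfl⟩ := Subtype.surjective_restrict (ne := fun v => ⟨v⟩) (· ∈ D) f
  refine ⟨f, fun u hu => (G.mem_neighborFinset _ _).1 (f_mem ⟨u, hu⟩), fun v => ?_⟩
  have fiber_eq : {u ∈ D | f u = v} = Subtype.val '' ((fun u : D => f u) ⁻¹' {v}) := by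
    ext u
    simp [and_comm]
  rw [fiber_eq, Subtype.val_injective.encard_image]
  exact encard_fiber_le v

theorem edge_selection_bounded_general (three_le_degree : ∀ u ∈ D, 3 ≤ G.degree u)
    (degree_ne_one : ∀ u ∈ D, ∀ v, G.Adj u v → G.degree v ≠ 1) :
    ∃ sel : V → Sym2 V, (∀ u ∈ D, sel u ∈ G.incidenceSet u) ∧
      ∀ v ∉ D, {u ∈ D | v ∈ sel u}.encard ≤ (G.degree v / 2 : ℕ) := by
  obtain ⟨f, f_adj, encard_fiber_le⟩ :=
    exists_adj_encard_fiber_le_half_degree G three_le_degree degree_ne_one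
  refine ⟨fun u => s(u, f u), fun u hu => ⟨f_adj u hu, Sym2.mem_mk_left _ _⟩, fun v hv => ?_⟩
  refine (Set.encard_le_encard ?_).trans (encard_fiber_le v)
  rintro u ⟨hu, v_mem⟩
  obtain rfl | rfl := Sym2.mem_iff.1 v_mem
  · exact absurd hu hv
  · exact ⟨hu, rfl⟩

end LocallyFinite

/-- Let `G` be a finite simple graph of minimum degree at least `3`, and let
`D'` and `A` be disjoint sets of vertices such that every neighbor of every vertex of `D'`
belongs to `A`.  Then one can select, for every `u ∈ D'`, exactly one edge of `G` incident
with `u`, in such a way that every `v ∈ A` is incident with at most `⌊d_G(v)/2⌋` of the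
selected edges. -/
theorem edge_selection_bounded {V : Type*} [Fintype V] [DecidableEq V]
    (G : SimpleGraph V) [DecidableRel G.Adj] (hmin : ∀ v : V, 3 ≤ G.degree v)
    (D' A : Finset V) (hdisj : Disjoint D' A)
    (hN : ∀ u ∈ D', ∀ v : V, G.Adj u v → v ∈ A) :
    ∃ sel : V → Sym2 V,
      (∀ u ∈ D', sel u ∈ G.incidenceFinset u) ∧
      (∀ v ∈ A, (D'.filter (fun u => v ∈ sel u)).card ≤ G.degree v / 2) := by
  obtain ⟨sel, sel_mem, encard_le⟩ := edge_selection_bounded_general G (D := D')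
    (fun u _ => hmin u) (fun _ _ v _ => by have := hmin v; lia)
  refine ⟨sel, fun u hu => (G.mem_incidenceFinset u _).2 (sel_mem u hu), fun v hv => ?_⟩
  rw [← Nat.cast_le (α := ℕ∞), ← Set.encard_coe_eq_coe_finsetCard, coe_filter]
  exact encard_le v (disjoint_right.1 hdisj hv)
end

section
/- Let G be a finite simple graph of minimum degree at least 2, and suppose G has an induced subgraph H such that H has maximum degree at most 3 and chromatic index 4 (that is, H is a class 2 graph of maximum degree 3), and every vertex of H has degree 2 or 3 in G. Then G has no majority 3-edge-coloring. -/
/-- A proper edge-coloring of `G` with `n` colors: distinct edges sharing an endpoint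
receive distinct colors. -/
def IsProperEdgeColoring {V : Type*} (G : SimpleGraph V) {n : ℕ} (c : Sym2 V → Fin n) :
    Prop :=
  ∀ e₁ ∈ G.edgeSet, ∀ e₂ ∈ G.edgeSet, e₁ ≠ e₂ → (∃ v : V, v ∈ e₁ ∧ v ∈ e₂) → c e₁ ≠ c e₂

/-- The chromatic index of `G`: the least number of colors in a proper edge-coloring. -/
noncomputable def chromaticIndex {V : Type*} (G : SimpleGraph V) : ℕ :=
  sInf {n : ℕ | ∃ c : Sym2 V → Fin n, IsProperEdgeColoring G c}

/-!
A color class of size `k` at a vertex of degree at most `3` satisfies `2 * k ≤ 3`, so `k ≤ 1`: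
around such vertices a majority coloring is already proper. Hence it restricts to a proper
coloring of any subgraph all of whose vertices have degree at most `3` in the whole graph.
-/

/-- A majority edge-coloring of a locally finite graph: at every vertex, each color appears on at
most half of the incident edges. The bound is multiplied by `2` to avoid truncated division, and
the values of `c` on pairs that are not edges are ignored. -/
def IsMajorityEdgeColoring {V κ : Type*} [DecidableEq V] [DecidableEq κ] (G : SimpleGraph V)
    [G.LocallyFinite] (c : Sym2 V → κ) : Prop :=
  ∀ (u : V) (α : κ), 2 * ((G.incidenceFinset u).filter (fun e => c e = α)).card ≤ G.degree u

theorem IsMajorityEdgeColoring.injOn_incidenceSet {V κ : Type*} [DecidableEq V] [DecidableEq κ]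
    {G : SimpleGraph V} [G.LocallyFinite] {c : Sym2 V → κ} (hc : IsMajorityEdgeColoring G c)
    {v : V} (hv : G.degree v ≤ 3) : Set.InjOn c (G.incidenceSet v) := by
  intro e₁ he₁ e₂ he₂ heq
  have color_class_card_le_one :
      ((G.incidenceFinset v).filter (fun e => c e = c e₂)).card ≤ 1 := by
    have := hc v (c e₂)
    omega
  refine Finset.card_le_one.mp color_class_card_le_one e₁ ?_ e₂ ?_
  · exact Finset.mem_filter.mpr ⟨(G.mem_incidenceFinset v e₁).mpr he₁, heq⟩
  · exact Finset.mem_filter.mpr ⟨(G.mem_incidenceFinset v e₂).mpr he₂, rfl⟩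

theorem isProperEdgeColoring_iff_injOn_incidenceSet {V : Type*} {G : SimpleGraph V} {n : ℕ}
    {c : Sym2 V → Fin n} :
    IsProperEdgeColoring G c ↔ ∀ v, Set.InjOn c (G.incidenceSet v) := by
  constructor
  · intro hc v e₁ he₁ e₂ he₂ heq
    by_contra hne
    exact hc e₁ he₁.1 e₂ he₂.1 hne ⟨v, he₁.2, he₂.2⟩ heq
  · rintro hc e₁ he₁ e₂ he₂ hne ⟨v, hv₁, hv₂⟩ heq
    exact hne (hc v ⟨he₁, hv₁⟩ ⟨he₂, hv₂⟩ heq)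

theorem IsProperEdgeColoring.chromaticIndex_le {V : Type*} {G : SimpleGraph V} {n : ℕ}
    {c : Sym2 V → Fin n} (hc : IsProperEdgeColoring G c) : chromaticIndex G ≤ n :=
  Nat.sInf_le ⟨c, hc⟩

theorem mapsTo_sym2Map_incidenceSet {V W : Type*} {H : SimpleGraph W} {G : SimpleGraph V}
    (f : H →g G) (w : W) :
    Set.MapsTo (Sym2.map f) (H.incidenceSet w) (G.incidenceSet (f w)) :=
  fun _ he => ⟨f.map_mem_edgeSet he.1, Sym2.mem_map.mpr ⟨w, he.2, rfl⟩⟩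

theorem isProperEdgeColoring_comp_sym2Map {V W : Type*} {H : SimpleGraph W} {G : SimpleGraph V}
    {n : ℕ} {c : Sym2 V → Fin n} (f : H →g G) (hf : Function.Injective f)
    (hc : ∀ w, Set.InjOn c (G.incidenceSet (f w))) :
    IsProperEdgeColoring H (c ∘ Sym2.map f) :=
  isProperEdgeColoring_iff_injOn_incidenceSet.mpr fun w =>
    (hc w).comp (Sym2.map.injective hf).injOn (mapsTo_sym2Map_incidenceSet f w)

theorem no_majority_three_coloring_of_class_two_induced_general {V : Type*} [DecidableEq V]
    (G : SimpleGraph V) [G.LocallyFinite] {k : ℕ} (S : Set V)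
    (hchi : k < chromaticIndex (G.induce S)) (hdeg : ∀ v ∈ S, G.degree v ≤ 3) :
    ¬ ∃ c : Sym2 V → Fin k, IsMajorityEdgeColoring G c := by
  rintro ⟨c, hc⟩
  let inclusion := SimpleGraph.Embedding.induce (G := G) S
  have hproper : IsProperEdgeColoring (G.induce S) (c ∘ Sym2.map inclusion) :=
    isProperEdgeColoring_comp_sym2Map inclusion.toHom inclusion.injective
      fun v => hc.injOn_incidenceSet (hdeg v v.2)
  exact hchi.not_ge hproper.chromaticIndex_le

/-- Let `G` be a finite simple graph of minimum degree at least `2`, and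
suppose `G` has an induced subgraph `H` (induced on a vertex set `S`) of maximum degree at
most `3` and chromatic index `4`, all of whose vertices have degree `2` or `3` in `G`.
Then `G` has no majority `3`-edge-coloring. -/
theorem no_majority_three_coloring_of_class_two_induced {V : Type*} [Fintype V]
    [DecidableEq V] (G : SimpleGraph V) [DecidableRel G.Adj]
    (hmin : ∀ v : V, 2 ≤ G.degree v) (S : Finset V)
    (hmaxH : ∀ v ∈ S, (S.filter (fun w => G.Adj v w)).card ≤ 3)
    (hchiH : chromaticIndex (G.induce (S : Set V)) = 4)
    (hdeg : ∀ v ∈ S, G.degree v = 2 ∨ G.degree v = 3) :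
    ¬ ∃ c : Sym2 V → Fin 3, ∀ u : V, ∀ α : Fin 3,
        2 * ((G.incidenceFinset u).filter (fun e => c e = α)).card ≤ G.degree u :=
  no_majority_three_coloring_of_class_two_induced_general G (S : Set V) (by omega)
    fun v hv => by have := hdeg v hv; omega
end
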